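/- arXiv:2601.08188 — 9 statements merged into one kernel-verified Lean document; each statement's English description precedes it below -/
import Mathlib

section
/- Let H be a real inner product space with inner product (·,·), k ≥ 1 an integer, γ > 0 and T > 0. Let v₁, …, v_k : [0,T] → H be differentiable and w₁, …, w_k : [0,T] → H be maps such that each scalar function t ↦ (v_i(t), w_j(t)) is continuous on [0,T], and suppose the dynamics v_i′(t) = γ( w_i(t) − Σ_{j=1}^k (v_j(t), w_i(t)) v_j(t) ) holds for all t ∈ [0,T] and 1 ≤ i ≤ k. If (v_i(0), v_j(0)) = δ_{ij} for all 1 ≤ i, j ≤ k, then (v_i(t), v_j(t)) = δ_{ij} for all 1 ≤ i, j ≤ k and all t ∈ [0,T]. -/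
open scoped RealInnerProductSpace

/-! Put `a l j = ⟪v l, w j⟫` and let `D i j = ⟪v i, v j⟫ - δ i j` be the defect of orthonormality.
Differentiating along the dynamics, the term `a i j` coming from `w j` is exactly cancelled by the
`δ` part of `∑ l, a l j * ⟪v i, v l⟫`, so that `D` solves the homogeneous linear system
`D' i j = -γ ∑ l, (a l j * D i l + a l i * D l j)` (`hasDerivAt_defect`). Its coefficients are
continuous, hence bounded on the compact interval, and `D 0 = 0`, so `D` vanishes identically by
Grönwall's inequality. -/

/-- The defect of orthonormality solves a homogeneous linear system whose coefficients are the
pairings `⟪v l, w j⟫`. -/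
lemma hasDerivAt_defect {H : Type*} [NormedAddCommGroup H] [InnerProductSpace ℝ H]
    {k : ℕ} {γ t : ℝ} {v w : Fin k → ℝ → H}
    (hdyn : ∀ i : Fin k,
      HasDerivAt (v i) (γ • (w i t - ∑ j, ⟪v j t, w i t⟫ • v j t)) t) (i j : Fin k) :
    HasDerivAt (fun s => ⟪v i s, v j s⟫ - if i = j then (1 : ℝ) else 0)
      (-γ * ∑ l, (⟪v l t, w j t⟫ * (⟪v i t, v l t⟫ - if i = l then (1 : ℝ) else 0)
        + ⟪v l t, w i t⟫ * (⟪v l t, v j t⟫ - if l = j then (1 : ℝ) else 0))) t := by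
  refine (((hdyn i).inner ℝ (hdyn j)).sub_const (if i = j then (1 : ℝ) else 0)).congr_deriv ?_
  simp only [inner_smul_left, inner_smul_right, inner_sub_left, inner_sub_right, inner_sum,
    sum_inner, mul_sub, Finset.sum_add_distrib, Finset.sum_sub_distrib, mul_ite, mul_one,
    mul_zero, Finset.sum_ite_eq, Finset.sum_ite_eq', Finset.mem_univ, if_true,
    RCLike.conj_to_real]
  rw [real_inner_comm (v j t) (w i t)]
  ring

/-- Orthonormality preservation for the continuous high-index saddle
dynamics: if `vᵢ′(t) = γ (wᵢ(t) − Σⱼ (vⱼ(t), wᵢ(t)) vⱼ(t))` on `[0,T]`, each pairing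
`t ↦ (vᵢ(t), wⱼ(t))` is continuous on `[0,T]`, and the `vᵢ(0)` are orthonormal, then the
`vᵢ(t)` remain orthonormal for all `t ∈ [0,T]`. -/
theorem stmt_1 {H : Type*} [NormedAddCommGroup H] [InnerProductSpace ℝ H]
    (k : ℕ) (hk : 1 ≤ k) (γ T : ℝ) (hγ : 0 < γ) (hT : 0 < T)
    (v w : Fin k → ℝ → H)
    (hcont : ∀ i j : Fin k, ContinuousOn (fun t => ⟪v i t, w j t⟫) (Set.Icc 0 T))
    (hdyn : ∀ i : Fin k, ∀ t ∈ Set.Icc (0 : ℝ) T,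
      HasDerivAt (v i) (γ • (w i t - ∑ j, ⟪v j t, w i t⟫ • v j t)) t)
    (hinit : ∀ i j : Fin k, ⟪v i 0, v j 0⟫ = if i = j then (1 : ℝ) else 0) :
    ∀ i j : Fin k, ∀ t ∈ Set.Icc (0 : ℝ) T,
      ⟪v i t, v j t⟫ = if i = j then (1 : ℝ) else 0 := by
  set D : ℝ → Fin k → Fin k → ℝ :=
    fun t i j => ⟪v i t, v j t⟫ - if i = j then (1 : ℝ) else 0 with hD
  set D' : ℝ → Fin k → Fin k → ℝ := fun t i j =>
    -γ * ∑ l, (⟪v l t, w j t⟫ * D t i l + ⟪v l t, w i t⟫ * D t l j) with hD'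
  have hder : ∀ t ∈ Set.Icc (0 : ℝ) T, HasDerivAt D (D' t) t := fun t ht =>
    hasDerivAt_pi.2 fun i => hasDerivAt_pi.2 fun j =>
      hasDerivAt_defect (fun i => hdyn i t ht) i j
  obtain ⟨C, hC⟩ := isCompact_Icc.exists_bound_of_continuousOn
    (f := fun t (i j : Fin k) => ⟪v i t, w j t⟫)
    (continuousOn_pi.2 fun i => continuousOn_pi.2 fun j => hcont i j)
  have hentry : ∀ (A : Fin k → Fin k → ℝ) (i j : Fin k), |A i j| ≤ ‖A‖ := fun A i j =>
    (norm_le_pi_norm (A i) j).trans (norm_le_pi_norm A i)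
  have hzero : ∀ t ∈ Set.Icc (0 : ℝ) T, D t = 0 := by
    refine eq_zero_of_abs_deriv_le_mul_abs_self_of_eq_zero_right (f' := D')
      (K := γ * (k * (2 * C)))
      (fun t ht => (hder t ht).continuousAt.continuousWithinAt)
      (fun t ht => (hder t (Set.Ico_subset_Icc_self ht)).hasDerivWithinAt) ?_ ?_
    · ext i j
      simp [hD, hinit]
    · intro t ht
      have ha : ∀ l j, |⟪v l t, w j t⟫| ≤ C := fun l j =>
        (hentry (fun i j => ⟪v i t, w j t⟫) l j).trans (hC t (Set.Ico_subset_Icc_self ht))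
      have hC0 : 0 ≤ C := (norm_nonneg _).trans (hC t (Set.Ico_subset_Icc_self ht))
      refine (pi_norm_le_iff_of_nonneg (by positivity)).2 fun i =>
        (pi_norm_le_iff_of_nonneg (by positivity)).2 fun j => ?_
      have hterm : ∀ l ∈ Finset.univ,
          |⟪v l t, w j t⟫ * D t i l + ⟪v l t, w i t⟫ * D t l j| ≤ 2 * C * ‖D t‖ := by
        intro l _
        calc _ ≤ |⟪v l t, w j t⟫| * |D t i l| + |⟪v l t, w i t⟫| * |D t l j| := by
              simpa only [abs_mul] using abs_add_le
                (⟪v l t, w j t⟫ * D t i l) (⟪v l t, w i t⟫ * D t l j)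
          _ ≤ C * ‖D t‖ + C * ‖D t‖ := by
              gcongr
              exacts [ha l j, hentry _ i l, ha l i, hentry _ l j]
          _ = 2 * C * ‖D t‖ := by ring
      have hsum := (Finset.abs_sum_le_sum_abs _ _).trans (Finset.sum_le_sum hterm)
      rw [Finset.sum_const, Finset.card_univ, Fintype.card_fin, nsmul_eq_mul] at hsum
      rw [hD', Real.norm_eq_abs, abs_mul, abs_neg, abs_of_pos hγ]
      calc _ ≤ γ * (k * (2 * C * ‖D t‖)) := by gcongr
        _ = _ := by ring
  intro i j t ht
  exact sub_eq_zero.1 (congrFun (congrFun (hzero t ht) i) j)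
end

section
/- Let H be a real inner product space with inner product (·,·), k ≥ 1 an integer, γ > 0 and T > 0. Let v₁, …, v_k : [0,T] → H be differentiable and w₁, …, w_k : [0,T] → H be maps, and suppose the dynamics v_i′(t) = γ( w_i(t) − Σ_{j=1}^k (v_j(t), w_i(t)) v_j(t) ) holds for all t ∈ [0,T] and 1 ≤ i ≤ k. Define matrix-valued functions M, G : [0,T] → ℝ^{k×k} by M(t)_{ij} := (v_i(t), w_j(t)) and G(t)_{ij} := (v_i(t), v_j(t)) − δ_{ij}. Then G is differentiable and satisfies the matrix ordinary differential equation G′(t) = −γ ( M(t)ᵀ G(t) + G(t) M(t) ) for all t ∈ [0,T]. -/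
open scoped RealInnerProductSpace Matrix

/-- For the continuous high-index saddle dynamics
`vᵢ′(t) = γ (wᵢ(t) − Σⱼ (vⱼ(t), wᵢ(t)) vⱼ(t))`, the deviation `G(t)ᵢⱼ = (vᵢ(t), vⱼ(t)) − δᵢⱼ`
of the Gram matrix from the identity satisfies the matrix ODE
`G′(t) = −γ (M(t)ᵀ G(t) + G(t) M(t))` on `[0,T]`, where `M(t)ᵢⱼ = (vᵢ(t), wⱼ(t))`. -/
theorem stmt_2 {H : Type*} [NormedAddCommGroup H] [InnerProductSpace ℝ H]
    (k : ℕ) (hk : 1 ≤ k) (γ T : ℝ) (hγ : 0 < γ) (hT : 0 < T)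
    (v w : Fin k → ℝ → H)
    (hdyn : ∀ i : Fin k, ∀ t ∈ Set.Icc (0 : ℝ) T,
      HasDerivAt (v i) (γ • (w i t - ∑ j, ⟪v j t, w i t⟫ • v j t)) t)
    (M G : ℝ → Matrix (Fin k) (Fin k) ℝ)
    (hM : ∀ t, ∀ i j : Fin k, M t i j = ⟪v i t, w j t⟫)
    (hG : ∀ t, ∀ i j : Fin k, G t i j = ⟪v i t, v j t⟫ - if i = j then (1 : ℝ) else 0) :
    ∀ t ∈ Set.Icc (0 : ℝ) T, ∀ i j : Fin k,
      HasDerivAt (fun s => G s i j) (((-γ) • ((M t)ᵀ * G t + G t * M t)) i j) t := by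
  intro t ht i j
  -- The product rule gives `G′ᵢⱼ` in terms of `vᵢ′`, `vⱼ′`; up to the factor `-γ`, its two sums differ from
  -- `(Mᵀ G)ᵢⱼ` and `(G M)ᵢⱼ` by the Kronecker delta contributions `⟪wᵢ, vⱼ⟫` and `⟪vᵢ, wⱼ⟫`.
  have hd := ((hdyn i t ht).inner ℝ (hdyn j t ht)).sub_const (if i = j then (1 : ℝ) else 0)
  simp only [hG]
  refine hd.congr_deriv ?_
  have hMG : ((M t)ᵀ * G t) i j = ∑ l, ⟪v l t, w i t⟫ * ⟪v l t, v j t⟫ - ⟪w i t, v j t⟫ := by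
    simp [Matrix.mul_apply, hM, hG, mul_sub, Finset.sum_sub_distrib, real_inner_comm (w i t)]
  have hGM : (G t * M t) i j = ∑ l, ⟪v i t, v l t⟫ * ⟪v l t, w j t⟫ - ⟪v i t, w j t⟫ := by
    simp [Matrix.mul_apply, hM, hG, sub_mul, Finset.sum_sub_distrib]
  rw [Matrix.smul_apply, Matrix.add_apply, hMG, hGM]
  simp only [inner_smul_left, inner_smul_right, inner_sub_left, inner_sub_right, sum_inner,
    inner_sum, smul_eq_mul, RCLike.conj_to_real]
  simp only [mul_comm ⟪v _ t, w j t⟫]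
  ring
end

section
/- Let H be a real inner product space with inner product (·,·) and induced norm ‖·‖. Fix an integer k ≥ 1 and real numbers γ, τ > 0. For families of vectors v₁⁻, …, v_k⁻ and v₁⁺, …, v_k⁺ in H and a bilinear map D : H × H → ℝ, set v̄_i := (v_i⁺ + v_i⁻)/2 and m_i := (v̄_i, v̄_i); say that the step equations hold for D if for every 1 ≤ i ≤ k and every χ ∈ H one has (γτ)⁻¹ (v_i⁺ − v_i⁻, χ) = −m_i D(v̄_i, χ) + (v̄_i, χ) D(v̄_i, v̄_i) + Σ_{l<i} m_i (v_l⁺, χ) D(v̄_i, v_l⁺) + Σ_{l>i} m_i (v_l⁻, χ) D(v̄_i, v_l⁻); and say that the step is nondegenerate for D if (τγ)⁻¹ ≠ (1/2) D(v̄_i, v̄_i) for every 1 ≤ i ≤ k. Suppose (v_i⁻, v_j⁻) = δ_{ij} for all 1 ≤ i, j ≤ k, the step equations hold for D, and the step is nondegenerate for D. Then (v_p⁺, v_q⁻) = 0 for all 1 ≤ p < q ≤ k. -/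
/-!
Test the `p`-th step equation with `χ = v_q⁻`, where `p < q`. By orthonormality of the old family
the sum over `l > p` reduces to its `l = q` term, which cancels `−m_p D(v̄_p, v_q⁻)`. The sum over
`l < p` vanishes by strong induction on `p`, since `l < p < q`. Because `(v_p⁻, v_q⁻) = 0`, both
remaining inner products are multiples of `(v_p⁺, v_q⁻)`, leaving
`((τγ)⁻¹ − (1/2) D(v̄_p, v̄_p)) (v_p⁺, v_q⁻) = 0`, and nondegeneracy says the first factor is nonzero.
-/

open scoped RealInnerProductSpace BigOperators

/-- The midpoint `v̄ᵢ = (vᵢ⁺ + vᵢ⁻)/2` of two families of vectors. -/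
noncomputable def midVec {H : Type*} [NormedAddCommGroup H] [InnerProductSpace ℝ H]
    {k : ℕ} (vm vp : Fin k → H) (i : Fin k) : H :=
  (2 : ℝ)⁻¹ • (vp i + vm i)

/-- One step of the retraction-free orthonormality-preserving scheme: for every `i` and every
test vector `χ`,
`(γτ)⁻¹ (vᵢ⁺ − vᵢ⁻, χ) = −mᵢ D(v̄ᵢ, χ) + (v̄ᵢ, χ) D(v̄ᵢ, v̄ᵢ)
  + Σ_{l<i} mᵢ (v_l⁺, χ) D(v̄ᵢ, v_l⁺) + Σ_{l>i} mᵢ (v_l⁻, χ) D(v̄ᵢ, v_l⁻)`,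
where `mᵢ = (v̄ᵢ, v̄ᵢ)`. -/
def StepEqs {H : Type*} [NormedAddCommGroup H] [InnerProductSpace ℝ H]
    {k : ℕ} (γ τ : ℝ) (vm vp : Fin k → H) (D : H →ₗ[ℝ] H →ₗ[ℝ] ℝ) : Prop :=
  ∀ i : Fin k, ∀ χ : H,
    (γ * τ)⁻¹ * ⟪vp i - vm i, χ⟫ =
      -⟪midVec vm vp i, midVec vm vp i⟫ * D (midVec vm vp i) χ
      + ⟪midVec vm vp i, χ⟫ * D (midVec vm vp i) (midVec vm vp i)
      + ∑ l ∈ Finset.univ.filter (fun l => l < i),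
          ⟪midVec vm vp i, midVec vm vp i⟫ * ⟪vp l, χ⟫ * D (midVec vm vp i) (vp l)
      + ∑ l ∈ Finset.univ.filter (fun l => i < l),
          ⟪midVec vm vp i, midVec vm vp i⟫ * ⟪vm l, χ⟫ * D (midVec vm vp i) (vm l)

/-- Nondegeneracy of one step of the scheme: `(τγ)⁻¹ ≠ (1/2) D(v̄ᵢ, v̄ᵢ)` for every `i`. -/
def StepNondeg {H : Type*} [NormedAddCommGroup H] [InnerProductSpace ℝ H]
    {k : ℕ} (γ τ : ℝ) (vm vp : Fin k → H) (D : H →ₗ[ℝ] H →ₗ[ℝ] ℝ) : Prop :=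
  ∀ i : Fin k, (τ * γ)⁻¹ ≠ (1 / 2) * D (midVec vm vp i) (midVec vm vp i)

/-- Lemma 3.2, abstract form. If the old family `vᵢ⁻` is orthonormal, the
step equations hold for the bilinear map `D`, and the step is nondegenerate for `D`, then
`(v_p⁺, v_q⁻) = 0` for all `p < q`. -/
theorem stmt_5 {H : Type*} [NormedAddCommGroup H] [InnerProductSpace ℝ H]
    (k : ℕ) (hk : 1 ≤ k) (γ τ : ℝ) (hγ : 0 < γ) (hτ : 0 < τ)
    (vm vp : Fin k → H) (D : H →ₗ[ℝ] H →ₗ[ℝ] ℝ)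
    (horth : ∀ i j : Fin k, ⟪vm i, vm j⟫ = if i = j then (1 : ℝ) else 0)
    (hstep : StepEqs γ τ vm vp D)
    (hnd : StepNondeg γ τ vm vp D) :
    ∀ p q : Fin k, p < q → ⟪vp p, vm q⟫ = 0 := by
  intro p
  induction p using WellFoundedLT.induction with
  | ind p ih =>
    intro q hpq
    have hE := hstep p (vm q)
    have hpq0 : ⟪vm p, vm q⟫ = 0 := by rw [horth, if_neg hpq.ne]
    have hdiff : ⟪vp p - vm p, vm q⟫ = ⟪vp p, vm q⟫ := by
      rw [inner_sub_left, hpq0, sub_zero]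
    have hmid : ⟪midVec vm vp p, vm q⟫ = 2⁻¹ * ⟪vp p, vm q⟫ := by
      rw [midVec, real_inner_smul_left, inner_add_left, hpq0, add_zero]
    have hlow : ∑ l ∈ Finset.univ.filter (fun l => l < p),
        ⟪midVec vm vp p, midVec vm vp p⟫ * ⟪vp l, vm q⟫ * D (midVec vm vp p) (vp l) = 0 := by
      refine Finset.sum_eq_zero fun l hl => ?_
      have hlp : l < p := (Finset.mem_filter.mp hl).2
      rw [ih l hlp q (hlp.trans hpq), mul_zero, zero_mul]
    have hhigh : ∑ l ∈ Finset.univ.filter (fun l => p < l),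
        ⟪midVec vm vp p, midVec vm vp p⟫ * ⟪vm l, vm q⟫ * D (midVec vm vp p) (vm l)
          = ⟪midVec vm vp p, midVec vm vp p⟫ * D (midVec vm vp p) (vm q) := by
      rw [Finset.sum_eq_single_of_mem q (by simpa using hpq)]
      · rw [horth, if_pos rfl, mul_one]
      · intro l _ hlq
        rw [horth, if_neg hlq, mul_zero, zero_mul]
    rw [hdiff, hmid, hlow, hhigh, mul_comm γ τ] at hE
    have hfac : ((τ * γ)⁻¹ - (1 / 2) * D (midVec vm vp p) (midVec vm vp p))
        * ⟪vp p, vm q⟫ = 0 := by linarith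
    exact (mul_eq_zero.mp hfac).resolve_left (sub_ne_zero.mpr (hnd p))
end

section
/- Let H be a real inner product space with inner product (·,·) and induced norm ‖·‖. Fix an integer k ≥ 1 and real numbers γ, τ > 0. For families of vectors v₁⁻, …, v_k⁻ and v₁⁺, …, v_k⁺ in H and a bilinear map D : H × H → ℝ, set v̄_i := (v_i⁺ + v_i⁻)/2 and m_i := (v̄_i, v̄_i); say that the step equations hold for D if for every 1 ≤ i ≤ k and every χ ∈ H one has (γτ)⁻¹ (v_i⁺ − v_i⁻, χ) = −m_i D(v̄_i, χ) + (v̄_i, χ) D(v̄_i, v̄_i) + Σ_{l<i} m_i (v_l⁺, χ) D(v̄_i, v_l⁺) + Σ_{l>i} m_i (v_l⁻, χ) D(v̄_i, v_l⁻); and say that the step is nondegenerate for D if (τγ)⁻¹ ≠ (1/2) D(v̄_i, v̄_i) for every 1 ≤ i ≤ k. Suppose (v_i⁻, v_j⁻) = δ_{ij} for all 1 ≤ i, j ≤ k, the step equations hold for D, and the step is nondegenerate for D. Then (v_i⁺, v_j⁺) = δ_{ij} for all 1 ≤ i, j ≤ k. -/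
/-!
The new vectors are computed one after another. When `vᵢ⁺` is computed, the current family consists
of the vectors `w l = v_l⁺` for `l < i` and `w l = v_l⁻` for `l > i`, together with `vᵢ⁻`.
Inductively this mixed family is orthonormal. Testing the step equation with `χ = w j`, the sum
collapses to a term cancelling `-mᵢ D(v̄ᵢ, w j)`, and `(vᵢ⁺, w j) ((γτ)⁻¹ - D(v̄ᵢ, v̄ᵢ)/2) = 0` is
left, so nondegeneracy gives `vᵢ⁺ ⟂ w j`. Then `v̄ᵢ ⟂ w j` for all `j`, and testing with `χ = v̄ᵢ`
makes the whole right-hand side vanish, so `‖vᵢ⁺‖² = ‖vᵢ⁻‖²` (`step_replace`). Hence replacing `vᵢ⁻`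
by `vᵢ⁺` keeps the mixed family orthonormal; strong induction on `i` (`step_invariant`) concludes.
-/

open scoped RealInnerProductSpace BigOperators

/-- Replacement of one vector: if the unit vector `a` is orthogonal to the orthonormal family `w`
on `s`, and `b` is obtained from `a` by the step equation with projection onto `w` and functional
`F = D(v̄, ·)`, then `b` is again a unit vector orthogonal to `w`. -/
theorem step_replace {H ι : Type*} [NormedAddCommGroup H] [InnerProductSpace ℝ H] [DecidableEq ι]
    (s : Finset ι) (w : ι → H) (a b u : H) (F : H →ₗ[ℝ] ℝ) (c : ℝ) (hc : c ≠ 0)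
    (hu : u = (2 : ℝ)⁻¹ • (b + a)) (hcF : c ≠ (1 / 2) * F u)
    (hw : ∀ l ∈ s, ∀ j ∈ s, ⟪w l, w j⟫ = if l = j then (1 : ℝ) else 0)
    (haw : ∀ j ∈ s, ⟪a, w j⟫ = 0) (haa : ⟪a, a⟫ = (1 : ℝ))
    (heq : ∀ χ : H, c * ⟪b - a, χ⟫ =
      -⟪u, u⟫ * F χ + ⟪u, χ⟫ * F u + ∑ l ∈ s, ⟪u, u⟫ * ⟪w l, χ⟫ * F (w l)) :
    ⟪b, b⟫ = (1 : ℝ) ∧ ∀ j ∈ s, ⟪b, w j⟫ = (0 : ℝ) := by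
  have huw : ∀ j ∈ s, ⟪u, w j⟫ = (2 : ℝ)⁻¹ * ⟪b, w j⟫ := by
    intro j hj
    rw [hu, real_inner_smul_left, inner_add_left, haw j hj, add_zero]
  have hbw : ∀ j ∈ s, ⟪b, w j⟫ = (0 : ℝ) := by
    intro j hj
    have h := heq (w j)
    have hsum : ∑ l ∈ s, ⟪u, u⟫ * ⟪w l, w j⟫ * F (w l) = ⟪u, u⟫ * F (w j) := by
      rw [Finset.sum_eq_single_of_mem j hj]
      · rw [hw j hj j hj, if_pos rfl, mul_one]
      · intro l hl hlj
        simp [hw l hl j hj, hlj]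
    rw [hsum, huw j hj, inner_sub_left, haw j hj] at h
    have h2 : (c - (1 / 2) * F u) * ⟪b, w j⟫ = 0 := by linarith
    exact (mul_eq_zero.mp h2).resolve_left (sub_ne_zero.mpr hcF)
  refine ⟨?_, hbw⟩
  have h := heq u
  have hsum : ∑ l ∈ s, ⟪u, u⟫ * ⟪w l, u⟫ * F (w l) = 0 := by
    refine Finset.sum_eq_zero fun l hl => ?_
    rw [real_inner_comm u (w l), huw l hl, hbw l hl]
    simp
  rw [hsum] at h
  have h2 : c * ⟪b - a, u⟫ = 0 := by linarith
  have h3 := (mul_eq_zero.mp h2).resolve_left hc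
  rw [hu, real_inner_smul_right, inner_add_right, inner_sub_left, inner_sub_left, haa,
    real_inner_comm a b] at h3
  linarith

/-- The invariant carried by the strong induction: the `i`-th new vector is a unit vector,
orthogonal to the earlier new vectors and to the later old ones. -/
theorem step_invariant {H : Type*} [NormedAddCommGroup H] [InnerProductSpace ℝ H]
    {k : ℕ} {γ τ : ℝ} (hγ : 0 < γ) (hτ : 0 < τ)
    {vm vp : Fin k → H} {D : H →ₗ[ℝ] H →ₗ[ℝ] ℝ}
    (horth : ∀ i j : Fin k, ⟪vm i, vm j⟫ = if i = j then (1 : ℝ) else 0)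
    (hstep : StepEqs γ τ vm vp D) (hnd : StepNondeg γ τ vm vp D) (i : Fin k) :
    ⟪vp i, vp i⟫ = (1 : ℝ) ∧ (∀ l < i, ⟪vp i, vp l⟫ = (0 : ℝ)) ∧
      ∀ l, i < l → ⟪vp i, vm l⟫ = (0 : ℝ) := by
  induction i using WellFoundedLT.induction with
  | ind i ih =>
  have hvp : ∀ l < i, ∀ j < i, ⟪vp l, vp j⟫ = if l = j then (1 : ℝ) else 0 := by
    intro l hl j hj
    rcases lt_trichotomy l j with h | h | h
    · rw [if_neg h.ne, real_inner_comm]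
      exact (ih j hj).2.1 l h
    · subst h
      simpa using (ih l hl).1
    · rw [if_neg h.ne']
      exact (ih l hl).2.1 j h
  have key := step_replace (Finset.univ.filter (fun l => l < i) ∪ Finset.univ.filter (fun l => i < l))
    (fun l => if l < i then vp l else vm l) (vm i) (vp i) (midVec vm vp i) (D (midVec vm vp i))
    (γ * τ)⁻¹ (by positivity) rfl (by rw [mul_comm γ τ]; exact hnd i) ?_ ?_
    (by rw [horth, if_pos rfl]) ?_
  · refine ⟨key.1, fun l hl => ?_, fun l hl => ?_⟩
    · simpa [hl] using key.2 l (by simp [hl])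
    · simpa [hl.not_gt] using key.2 l (by simp [hl])
  · intro l hl j hj
    simp only [Finset.mem_union, Finset.mem_filter, Finset.mem_univ, true_and] at hl hj
    rcases hl with hl | hl <;> rcases hj with hj | hj
    · simpa [hl, hj] using hvp l hl j hj
    · simpa [hl, hj.not_gt, (hl.trans hj).ne] using (ih l hl).2.2 j (hl.trans hj)
    · have h := (ih j hj).2.2 l (hj.trans hl)
      rw [real_inner_comm] at h
      simpa [hj, hl.not_gt, (hj.trans hl).ne'] using h
    · simpa [hl.not_gt, hj.not_gt] using horth l j
  · intro j hj
    simp only [Finset.mem_union, Finset.mem_filter, Finset.mem_univ, true_and] at hj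
    rcases hj with hj | hj
    · simpa [hj, real_inner_comm] using (ih j hj).2.2 i hj
    · simpa [hj.not_gt, hj.ne] using horth i j
  · intro χ
    rw [hstep i χ, Finset.sum_union, add_assoc]
    · congr 2
      · refine Finset.sum_congr rfl fun l hl => ?_
        have hl' : l < i := by simpa using hl
        simp [hl']
      · refine Finset.sum_congr rfl fun l hl => ?_
        have hl' : i < l := by simpa using hl
        simp [hl'.not_gt]
    · refine Finset.disjoint_left.mpr fun l hl hl' => ?_
      simp only [Finset.mem_filter, Finset.mem_univ, true_and] at hl hl'
      exact hl.not_gt hl'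

/-- induction step of Theorem 3.4, abstract form. If the old family `vᵢ⁻` is
orthonormal, the step equations hold for the bilinear map `D`, and the step is nondegenerate
for `D`, then the new family `vᵢ⁺` is orthonormal. -/
theorem stmt_6 {H : Type*} [NormedAddCommGroup H] [InnerProductSpace ℝ H]
    (k : ℕ) (hk : 1 ≤ k) (γ τ : ℝ) (hγ : 0 < γ) (hτ : 0 < τ)
    (vm vp : Fin k → H) (D : H →ₗ[ℝ] H →ₗ[ℝ] ℝ)
    (horth : ∀ i j : Fin k, ⟪vm i, vm j⟫ = if i = j then (1 : ℝ) else 0)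
    (hstep : StepEqs γ τ vm vp D)
    (hnd : StepNondeg γ τ vm vp D) :
    ∀ i j : Fin k, ⟪vp i, vp j⟫ = if i = j then (1 : ℝ) else 0 := by
  intro i j
  rcases lt_trichotomy i j with h | h | h
  · rw [if_neg h.ne, real_inner_comm]
    exact (step_invariant hγ hτ horth hstep hnd j).2.1 i h
  · subst h
    simpa using (step_invariant hγ hτ horth hstep hnd i).1
  · rw [if_neg h.ne']
    exact (step_invariant hγ hτ horth hstep hnd i).2.1 j h
end

section
/- Let H be a real inner product space with inner product (·,·) and induced norm ‖·‖. Fix integers k ≥ 1 and N ≥ 0 and real numbers γ, τ > 0. For families of vectors v₁⁻, …, v_k⁻ and v₁⁺, …, v_k⁺ in H and a bilinear map D : H × H → ℝ, set v̄_i := (v_i⁺ + v_i⁻)/2 and m_i := (v̄_i, v̄_i); say that the step equations hold for D if for every 1 ≤ i ≤ k and every χ ∈ H one has (γτ)⁻¹ (v_i⁺ − v_i⁻, χ) = −m_i D(v̄_i, χ) + (v̄_i, χ) D(v̄_i, v̄_i) + Σ_{l<i} m_i (v_l⁺, χ) D(v̄_i, v_l⁺) + Σ_{l>i} m_i (v_l⁻,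 χ) D(v̄_i, v_l⁻); and say that the step is nondegenerate for D if (τγ)⁻¹ ≠ (1/2) D(v̄_i, v̄_i) for every 1 ≤ i ≤ k. Now let (v_i^n)_{1≤i≤k, 0≤n≤N} be vectors in H and D₁, …, D_N : H × H → ℝ bilinear maps such that (v_i⁰, v_j⁰) = δ_{ij} for all 1 ≤ i, j ≤ k and, for each 1 ≤ n ≤ N, the families (v_i^{n−1})_i (as the minus family) and (v_i^{n})_i (as the plus family) satisfy the step equations for D_n and the step is nondegenerate for D_n. Then (v_i^n, v_j^n) = δ_{ij} for all 1 ≤ i, j ≤ k and all 0 ≤ n ≤ N. -/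
/-!
Within one time step the indices are processed in increasing order, and the vectors entering the
`i`-th equation are those of the mixed family `w = (v₁⁺, …, v_{i-1}⁺, v_i⁻, v_{i+1}⁻, …, v_k⁻)`.
The equation replaces `w i` by `p = v_i⁺`, and this replacement preserves orthonormality
(`orthonormal_update`):

* testing against `w j` with `j ≠ i`, the terms with `D(v̄, w j)` cancel and what remains is
  `(γτ)⁻¹ (p, w j) = (1/2) D(v̄, v̄) (p, w j)`, so nondegeneracy gives `(p, w j) = 0`;
* testing against `v̄`, which is now orthogonal to all `w l` with `l ≠ i`, the right-hand side
  vanishes and the left-hand side is a multiple of `(p, p) - (w i, w i)`, so `p` is a unit vector.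

Replacing one vector after another turns the minus family into the plus family, and induction over
the time levels finishes the proof.
-/

open scoped RealInnerProductSpace BigOperators

/-- Replacing one member of an orthonormal family by the solution of its scheme equation keeps the
family orthonormal; `c` stands for `(γτ)⁻¹` and `u` for the midpoint. -/
lemma orthonormal_update {H : Type*} [NormedAddCommGroup H] [InnerProductSpace ℝ H]
    {k : ℕ} {c : ℝ} (hc : c ≠ 0) {w : Fin k → H} {D : H →ₗ[ℝ] H →ₗ[ℝ] ℝ}
    (hw : Orthonormal ℝ w) (i : Fin k) {p u : H} (hu : u = (2 : ℝ)⁻¹ • (p + w i))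
    (hnd : c ≠ (1 / 2) * D u u)
    (heq : ∀ χ : H, c * ⟪p - w i, χ⟫ = -⟪u, u⟫ * D u χ + ⟪u, χ⟫ * D u u
      + ∑ l ∈ Finset.univ.erase i, ⟪u, u⟫ * ⟪w l, χ⟫ * D u (w l)) :
    Orthonormal ℝ (Function.update w i p) := by
  have hg := orthonormal_iff_ite.mp hw
  have horth : ∀ j, j ≠ i → ⟪p, w j⟫ = 0 := by
    intro j hj
    have h := heq (w j)
    have hs : ∑ l ∈ Finset.univ.erase i, ⟪u, u⟫ * ⟪w l, w j⟫ * D u (w l)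
        = ⟪u, u⟫ * D u (w j) := by
      rw [Finset.sum_eq_single j]
      · rw [hg j j, if_pos rfl, mul_one]
      · intro l _ hl
        simp [hg l j, hl]
      · simp [hj]
    have hz : ⟪w i, w j⟫ = 0 := by simp [hg i j, hj.symm]
    have hm : ⟪u, w j⟫ = 2⁻¹ * ⟪p, w j⟫ := by
      rw [hu, real_inner_smul_left, inner_add_left, hz, add_zero]
    rw [hs, hm, inner_sub_left, hz] at h
    have h' : (c - (1 / 2) * D u u) * ⟪p, w j⟫ = 0 := by linear_combination h
    exact (mul_eq_zero.mp h').resolve_left (sub_ne_zero.mpr hnd)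
  have hunit : ⟪p, p⟫ = 1 := by
    have h := heq u
    have hs : ∑ l ∈ Finset.univ.erase i, ⟪u, u⟫ * ⟪w l, u⟫ * D u (w l) = 0 := by
      refine Finset.sum_eq_zero fun l hl => ?_
      have hl' : l ≠ i := Finset.ne_of_mem_erase hl
      have : ⟪w l, u⟫ = 0 := by
        rw [hu, real_inner_smul_right, inner_add_right, real_inner_comm, horth l hl', hg l i]
        simp [hl']
      simp [this]
    have hd : ⟪p - w i, u⟫ = 2⁻¹ * (⟪p, p⟫ - 1) := by
      have h1 : ⟪w i, w i⟫ = 1 := by simpa using hg i i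
      rw [hu, real_inner_smul_right, inner_sub_left, inner_add_right, inner_add_right, h1,
        real_inner_comm p (w i)]
      ring
    rw [hs, hd] at h
    have h' : c * (⟪p, p⟫ - 1) = 0 := by linear_combination 2 * h
    linarith [(mul_eq_zero.mp h').resolve_left hc]
  rw [orthonormal_iff_ite]
  intro a b
  rcases eq_or_ne a i with rfl | ha <;> rcases eq_or_ne b a with rfl | hab
  · simpa using hunit
  · simpa [hab, hab.symm] using horth b hab
  · simpa [ha] using hg b b
  · rcases eq_or_ne b i with rfl | hb
    · simpa [ha, real_inner_comm] using horth a ha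
    · simpa [ha, hb] using hg a b

/-- The family obtained from `vm` by replacing the first `s` members by those of `vp`. -/
def mixedFamily {H : Type*} {k : ℕ} (vm vp : Fin k → H) (s : ℕ) (l : Fin k) : H :=
  if l.val < s then vp l else vm l

lemma mixedFamily_succ {H : Type*} {k : ℕ} (vm vp : Fin k → H) (i : Fin k) :
    mixedFamily vm vp (i.val + 1) = Function.update (mixedFamily vm vp i.val) i (vp i) := by
  funext l
  rcases eq_or_ne l i with rfl | hl
  · simp [mixedFamily]
  · have : l.val ≠ i.val := fun h => hl (Fin.ext h)
    have h2 : l.val < i.val + 1 ↔ l.val < i.val := by omega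
    simp only [mixedFamily, Function.update_of_ne hl, h2]

lemma orthonormal_step {H : Type*} [NormedAddCommGroup H] [InnerProductSpace ℝ H]
    {k : ℕ} {γ τ : ℝ} (hγ : 0 < γ) (hτ : 0 < τ) {vm vp : Fin k → H}
    {D : H →ₗ[ℝ] H →ₗ[ℝ] ℝ} (hstep : StepEqs γ τ vm vp D) (hnd : StepNondeg γ τ vm vp D)
    (hvm : Orthonormal ℝ vm) : Orthonormal ℝ vp := by
  have key : ∀ s, s ≤ k → Orthonormal ℝ (mixedFamily vm vp s) := by
    intro s
    induction s with
    | zero =>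
      intro _
      have : mixedFamily vm vp 0 = vm := by funext l; simp [mixedFamily]
      rwa [this]
    | succ s ih =>
      intro hs
      have ho := ih (by omega)
      let i : Fin k := ⟨s, hs⟩
      have hwi : mixedFamily vm vp i.val i = vm i := by simp [mixedFamily]
      rw [show s + 1 = i.val + 1 from rfl, mixedFamily_succ]
      refine orthonormal_update (c := (γ * τ)⁻¹) (D := D) (u := midVec vm vp i)
        (by positivity) ho i (by rw [hwi]; rfl) (by rw [mul_comm γ τ]; exact hnd i) fun χ => ?_
      have hset : Finset.univ.erase i
          = Finset.univ.filter (fun l => l < i) ∪ Finset.univ.filter (fun l => i < l) := by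
        ext l
        simp [lt_or_lt_iff_ne]
      have hdisj : Disjoint (Finset.univ.filter (fun l => l < i))
          (Finset.univ.filter (fun l => i < l)) := by
        rw [Finset.disjoint_filter]
        exact fun l _ h => h.asymm
      rw [hwi, hstep i χ, hset, Finset.sum_union hdisj, ← add_assoc]
      congr 1
      · congr 1
        refine Finset.sum_congr rfl fun l hl => ?_
        have hl' : l.val < i.val := (Finset.mem_filter.mp hl).2
        rw [show mixedFamily vm vp i.val l = vp l from if_pos hl']
      · refine Finset.sum_congr rfl fun l hl => ?_
        have hl' : i.val < l.val := (Finset.mem_filter.mp hl).2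
        rw [show mixedFamily vm vp i.val l = vm l from if_neg hl'.not_gt]
  have : mixedFamily vm vp k = vp := by funext l; simp [mixedFamily]
  exact this ▸ key k le_rfl

/-- Theorem 3.4, abstract multi-step form. If the initial family `vᵢ⁰` is
orthonormal and at every step `1 ≤ n ≤ N` the families `(vᵢⁿ⁻¹)` and `(vᵢⁿ)` satisfy the
step equations for the bilinear map `Dₙ` with the nondegeneracy condition, then the families
remain orthonormal at every time level `0 ≤ n ≤ N`. -/
theorem stmt_7 {H : Type*} [NormedAddCommGroup H] [InnerProductSpace ℝ H]
    (k N : ℕ) (hk : 1 ≤ k) (γ τ : ℝ) (hγ : 0 < γ) (hτ : 0 < τ)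
    (v : ℕ → Fin k → H) (D : ℕ → (H →ₗ[ℝ] H →ₗ[ℝ] ℝ))
    (hinit : ∀ i j : Fin k, ⟪v 0 i, v 0 j⟫ = if i = j then (1 : ℝ) else 0)
    (hstep : ∀ n : ℕ, 1 ≤ n → n ≤ N → StepEqs γ τ (v (n - 1)) (v n) (D n))
    (hnd : ∀ n : ℕ, 1 ≤ n → n ≤ N → StepNondeg γ τ (v (n - 1)) (v n) (D n)) :
    ∀ n : ℕ, n ≤ N → ∀ i j : Fin k, ⟪v n i, v n j⟫ = if i = j then (1 : ℝ) else 0 := by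
  have key : ∀ n : ℕ, n ≤ N → Orthonormal ℝ (v n) := by
    intro n
    induction n with
    | zero => exact fun _ => orthonormal_iff_ite.mpr hinit
    | succ n ih =>
      intro hn
      exact orthonormal_step hγ hτ (hstep (n + 1) (by omega) hn) (hnd (n + 1) (by omega) hn)
        (ih (by omega))
  exact fun n hn => orthonormal_iff_ite.mp (key n hn)
end

section
/- Let H be a real inner product space with inner product (·,·) and induced norm ‖·‖. Fix an integer k ≥ 1 and real numbers γ, τ > 0. Let B, C : H × H → ℝ be bilinear maps with B symmetric, and set D := B − C. For families of vectors v₁⁻, …, v_k⁻ and v₁⁺, …, v_k⁺ in H, set v̄_i := (v_i⁺ + v_i⁻)/2 and m_i := (v̄_i, v̄_i); say that the step equations hold for D if for every 1 ≤ i ≤ k and every χ ∈ H one has (γτ)⁻¹ (v_i⁺ − v_i⁻, χ) = −m_i D(v̄_i, χ) + (v̄_i, χ) D(v̄_i, v̄_i) + Σ_{l<i} m_i (v_l⁺, χ) D(v̄_i, v_l⁺) + Σ_{l>i} m_i (v_l⁻, χ) D(v̄_i, v_l⁻); and say that the step is nondegenerate for D if (τγ)⁻¹ ≠ (1/2) D(v̄_i,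 v̄_i) for every 1 ≤ i ≤ k. Suppose (v_i⁻, v_j⁻) = δ_{ij} for all 1 ≤ i, j ≤ k, the step equations hold for D, and the step is nondegenerate for D. Then for every 1 ≤ i ≤ k, writing α_i := (v̄_i, v_i⁺), one has α_i = m_i = 1 − ‖v_i⁺ − v_i⁻‖²/4 ∈ [0,1] and the energy identity (γτ)⁻¹ ‖v_i⁺ − v_i⁻‖² = α_i ( (1/2) B(v_i⁻, v_i⁻) − (1/2) B(v_i⁺, v_i⁺) + C(v̄_i, v_i⁺ − v_i⁻) ). -/
/-!
The scheme updates the vectors one at a time, so the natural invariant is that the mixed family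
`v₁⁺, …, v_n⁺, v_{n+1}⁻, …, v_k⁻` (`mixedVec`) is orthonormal for every `n`. In the `i`-th step the
vectors `w_l`, `l ≠ i`, of the current mixed family are exactly those in the two sums of the scheme.
* Testing with `w_j`, `j ≠ i`, the terms in `D(v̄ᵢ, w_j)` cancel and what remains is
  `(2 (γτ)⁻¹ - D(v̄ᵢ, v̄ᵢ)) (v̄ᵢ, w_j) = 0`; nondegeneracy gives `(v̄ᵢ, w_j) = 0`, hence
  `(vᵢ⁺, w_j) = 0` (`inner_mixedVec_vp`).
* Testing with `v̄ᵢ`, everything on the right cancels, because `(v̄ᵢ, w_l) = 0`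
  for `l ≠ i`; so `‖vᵢ⁺‖² - ‖vᵢ⁻‖² = 0` (`inner_vp_self`).

Hence the invariant propagates (`mixedVec_orthonormal`). The formulas for `αᵢ` and `mᵢ` then follow
from `‖vᵢ⁺‖ = ‖vᵢ⁻‖ = 1`. Testing with `vᵢ⁺ - vᵢ⁻`, which is orthogonal to `v̄ᵢ` and to all `w_l`,
leaves only `-mᵢ D(v̄ᵢ, vᵢ⁺ - vᵢ⁻)`, and the symmetry of `B` turns `B(v̄ᵢ, vᵢ⁺ - vᵢ⁻)` into half the
difference of the energies.
-/

open scoped RealInnerProductSpace BigOperators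

section Mixed

variable {H : Type*} [NormedAddCommGroup H] [InnerProductSpace ℝ H] {k : ℕ}

/-- The partially updated family: `v_l⁺` for the indices `l < n` (counted from zero), which are
already updated, and `v_l⁻` for the others. -/
def mixedVec {E : Type*} (vm vp : Fin k → E) (n : ℕ) (l : Fin k) : E :=
  if l.val < n then vp l else vm l

lemma mixedVec_self {E : Type*} (vm vp : Fin k → E) (i : Fin k) :
    mixedVec vm vp i.val i = vm i := by
  simp [mixedVec]

/-- The step equation with its two sums merged into one over the current mixed family. -/
lemma StepEqs.mixed {γ τ : ℝ} {vm vp : Fin k → H} {D : H →ₗ[ℝ] H →ₗ[ℝ] ℝ}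
    (h : StepEqs γ τ vm vp D) (i : Fin k) (χ : H) :
    (γ * τ)⁻¹ * ⟪vp i - vm i, χ⟫ =
      -⟪midVec vm vp i, midVec vm vp i⟫ * D (midVec vm vp i) χ
      + ⟪midVec vm vp i, χ⟫ * D (midVec vm vp i) (midVec vm vp i)
      + ∑ l ∈ Finset.univ.erase i, ⟪midVec vm vp i, midVec vm vp i⟫ *
          ⟪mixedVec vm vp i.val l, χ⟫ * D (midVec vm vp i) (mixedVec vm vp i.val l) := by
  have hs : (Finset.univ.erase i : Finset (Fin k)) =
      Finset.univ.filter (fun l => l < i) ∪ Finset.univ.filter (fun l => i < l) := by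
    ext l
    simp
  have hd : Disjoint (Finset.univ.filter (fun l : Fin k => l < i))
      (Finset.univ.filter (fun l => i < l)) := by
    rw [Finset.disjoint_filter]
    intro l _ h1 h2
    exact lt_asymm h1 h2
  rw [h i χ, hs, Finset.sum_union hd, ← add_assoc]
  congr 1
  · congr 1
    refine Finset.sum_congr rfl fun l hl => ?_
    have hl' : l.val < i.val := (Finset.mem_filter.1 hl).2
    simp [mixedVec, hl']
  · refine Finset.sum_congr rfl fun l hl => ?_
    have hl' : i.val < l.val := (Finset.mem_filter.1 hl).2
    simp only [mixedVec, if_neg hl'.le.not_gt]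

lemma inner_midVec_left (vm vp : Fin k → H) (i : Fin k) (χ : H) :
    ⟪midVec vm vp i, χ⟫ = (⟪vp i, χ⟫ + ⟪vm i, χ⟫) / 2 := by
  simp only [midVec, real_inner_smul_left, inner_add_left]
  ring

variable {γ τ : ℝ} {vm vp : Fin k → H} {D : H →ₗ[ℝ] H →ₗ[ℝ] ℝ}

lemma inner_mixedVec_vp (hstep : StepEqs γ τ vm vp D) (hnd : StepNondeg γ τ vm vp D) {i : Fin k}
    (ho : ∀ a b : Fin k, ⟪mixedVec vm vp i.val a, mixedVec vm vp i.val b⟫ =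
      if a = b then (1 : ℝ) else 0) {j : Fin k} (hj : j ≠ i) :
    ⟪mixedVec vm vp i.val j, vp i⟫ = 0 := by
  have h := hstep.mixed i (mixedVec vm vp i.val j)
  have h0 : ⟪vm i, mixedVec vm vp i.val j⟫ = 0 := by
    rw [← mixedVec_self vm vp i, ho, if_neg hj.symm]
  -- by orthonormality only the summand `l = j` survives
  rw [Finset.sum_eq_single_of_mem j (by simp [hj])
    (fun l _ hl => by rw [ho, if_neg hl]; ring), ho, if_pos rfl, inner_sub_left, h0,
    inner_midVec_left vm vp i (mixedVec vm vp i.val j), h0] at h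
  have hne := hnd i
  rw [mul_comm τ γ] at hne
  rw [real_inner_comm]
  have hz : ((γ * τ)⁻¹ - 1 / 2 * D (midVec vm vp i) (midVec vm vp i)) *
      ⟪vp i, mixedVec vm vp i.val j⟫ = 0 := by
    linear_combination h
  exact (mul_eq_zero.1 hz).resolve_left (sub_ne_zero.2 hne)

/-- The sum in the step equation vanishes for test vectors in the span of `vᵢ⁺` and `vᵢ⁻`. -/
lemma StepEqs.mixed_of_span (hstep : StepEqs γ τ vm vp D) (hnd : StepNondeg γ τ vm vp D)
    {i : Fin k} (ho : ∀ a b : Fin k, ⟪mixedVec vm vp i.val a, mixedVec vm vp i.val b⟫ =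
      if a = b then (1 : ℝ) else 0) (s t : ℝ) :
    (γ * τ)⁻¹ * ⟪vp i - vm i, s • vp i + t • vm i⟫ =
      -⟪midVec vm vp i, midVec vm vp i⟫ * D (midVec vm vp i) (s • vp i + t • vm i)
      + ⟪midVec vm vp i, s • vp i + t • vm i⟫ * D (midVec vm vp i) (midVec vm vp i) := by
  rw [hstep.mixed i, Finset.sum_eq_zero, add_zero]
  intro l hl
  have hli := Finset.ne_of_mem_erase hl
  have h0 : ⟪mixedVec vm vp i.val l, vm i⟫ = 0 := by
    rw [← mixedVec_self vm vp i, ho, if_neg hli]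
  rw [inner_add_right, real_inner_smul_right, real_inner_smul_right, h0,
    inner_mixedVec_vp hstep hnd ho hli]
  ring

lemma inner_vp_self (hγτ : γ * τ ≠ 0) (hstep : StepEqs γ τ vm vp D)
    (hnd : StepNondeg γ τ vm vp D) {i : Fin k}
    (ho : ∀ a b : Fin k, ⟪mixedVec vm vp i.val a, mixedVec vm vp i.val b⟫ =
      if a = b then (1 : ℝ) else 0) :
    ⟪vp i, vp i⟫ = 1 := by
  have h := hstep.mixed_of_span hnd ho 2⁻¹ 2⁻¹
  have hm : (2⁻¹ : ℝ) • vp i + (2⁻¹ : ℝ) • vm i = midVec vm vp i := by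
    rw [midVec, smul_add]
  have hvm : ⟪vm i, vm i⟫ = 1 := by
    rw [← mixedVec_self vm vp i, ho, if_pos rfl]
  rw [hm, neg_mul, neg_add_cancel] at h
  have h2 := (mul_eq_zero.1 h).resolve_left (inv_ne_zero hγτ)
  rw [real_inner_comm, inner_midVec_left, inner_sub_right, inner_sub_right,
    real_inner_comm (vp i) (vm i), hvm] at h2
  linarith

lemma mixedVec_orthonormal (hγτ : γ * τ ≠ 0) (hstep : StepEqs γ τ vm vp D)
    (hnd : StepNondeg γ τ vm vp D)
    (horth : ∀ i j : Fin k, ⟪vm i, vm j⟫ = if i = j then (1 : ℝ) else 0) (n : ℕ) :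
    ∀ a b : Fin k, ⟪mixedVec vm vp n a, mixedVec vm vp n b⟫ = if a = b then (1 : ℝ) else 0 := by
  induction n with
  | zero => simpa [mixedVec] using horth
  | succ n ih =>
    have hne : ∀ l : Fin k, l.val ≠ n → mixedVec vm vp (n + 1) l = mixedVec vm vp n l := by
      intro l hl
      have : l.val < n + 1 ↔ l.val < n := by omega
      simp only [mixedVec, this]
    have heq : ∀ l : Fin k, l.val = n → mixedVec vm vp (n + 1) l = vp l := by
      intro l hl
      simp [mixedVec, hl]
    intro a b
    by_cases ha : a.val = n
    · subst ha
      rw [heq a rfl]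
      by_cases hb : b = a
      · subst hb
        rw [heq b rfl, inner_vp_self hγτ hstep hnd ih, if_pos rfl]
      · rw [hne b (fun h => hb (Fin.ext h)), real_inner_comm,
          inner_mixedVec_vp hstep hnd ih hb, if_neg (Ne.symm hb)]
    · by_cases hb : b.val = n
      · subst hb
        have hab : a ≠ b := fun h => ha (congrArg Fin.val h)
        rw [heq b rfl, hne a ha, inner_mixedVec_vp hstep hnd ih hab, if_neg hab]
      · rw [hne a ha, hne b hb, ih]

end Mixed

/-- discrete energy identity, abstract form of the key step of Theorem 4.1.
With `D = B − C`, `B` symmetric, orthonormal old family, step equations and nondegeneracy,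
for every `i`, writing `αᵢ = (v̄ᵢ, vᵢ⁺)`, one has
`αᵢ = mᵢ = 1 − ‖vᵢ⁺ − vᵢ⁻‖²/4 ∈ [0,1]` and
`(γτ)⁻¹ ‖vᵢ⁺ − vᵢ⁻‖² = αᵢ ((1/2) B(vᵢ⁻, vᵢ⁻) − (1/2) B(vᵢ⁺, vᵢ⁺) + C(v̄ᵢ, vᵢ⁺ − vᵢ⁻))`. -/
theorem stmt_8 {H : Type*} [NormedAddCommGroup H] [InnerProductSpace ℝ H]
    (k : ℕ) (hk : 1 ≤ k) (γ τ : ℝ) (hγ : 0 < γ) (hτ : 0 < τ)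
    (B C : H →ₗ[ℝ] H →ₗ[ℝ] ℝ) (hBsymm : ∀ x y : H, B x y = B y x)
    (vm vp : Fin k → H)
    (horth : ∀ i j : Fin k, ⟪vm i, vm j⟫ = if i = j then (1 : ℝ) else 0)
    (hstep : StepEqs γ τ vm vp (B - C))
    (hnd : StepNondeg γ τ vm vp (B - C)) :
    ∀ i : Fin k,
      ⟪midVec vm vp i, vp i⟫ = ⟪midVec vm vp i, midVec vm vp i⟫ ∧
      ⟪midVec vm vp i, vp i⟫ = 1 - ‖vp i - vm i‖ ^ 2 / 4 ∧
      0 ≤ ⟪midVec vm vp i, vp i⟫ ∧ ⟪midVec vm vp i, vp i⟫ ≤ 1 ∧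
      (γ * τ)⁻¹ * ‖vp i - vm i‖ ^ 2 =
        ⟪midVec vm vp i, vp i⟫ *
          ((1 / 2) * B (vm i) (vm i) - (1 / 2) * B (vp i) (vp i)
            + C (midVec vm vp i) (vp i - vm i)) := by
  intro i
  have hγτ : γ * τ ≠ 0 := (mul_pos hγ hτ).ne'
  have ho := mixedVec_orthonormal hγτ hstep hnd horth i.val
  have hp : ⟪vp i, vp i⟫ = 1 := inner_vp_self hγτ hstep hnd ho
  have hv : ⟪vm i, vm i⟫ = 1 := by rw [horth, if_pos rfl]
  have hc : ⟪vm i, vp i⟫ = ⟪vp i, vm i⟫ := real_inner_comm _ _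
  have hα : ⟪midVec vm vp i, vp i⟫ = (1 + ⟪vp i, vm i⟫) / 2 := by
    rw [inner_midVec_left, hp, hc]
  have hβ : ⟪midVec vm vp i, vm i⟫ = (1 + ⟪vp i, vm i⟫) / 2 := by
    rw [inner_midVec_left, hv]
    ring
  have hm : ⟪midVec vm vp i, midVec vm vp i⟫ = (1 + ⟪vp i, vm i⟫) / 2 := by
    rw [inner_midVec_left, real_inner_comm, hα, real_inner_comm (midVec vm vp i) (vm i), hβ]
    ring
  have hn : ‖vp i - vm i‖ ^ 2 = 2 - 2 * ⟪vp i, vm i⟫ := by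
    rw [← real_inner_self_eq_norm_sq, inner_sub_left, inner_sub_right, inner_sub_right, hp, hv, hc]
    ring
  refine ⟨hα.trans hm.symm, ?_, ?_, ?_, ?_⟩
  · rw [hα, hn]
    ring
  · rw [hα, ← hm]
    exact real_inner_self_nonneg
  · rw [hα]
    have := sq_nonneg ‖vp i - vm i‖
    linarith
  · have h := hstep.mixed_of_span hnd ho 1 (-1)
    rw [one_smul, neg_one_smul, ← sub_eq_add_neg, real_inner_self_eq_norm_sq,
      inner_sub_right (midVec vm vp i), hα, hβ, hm, sub_self, zero_mul, add_zero] at h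
    have hB : B (midVec vm vp i) (vp i - vm i) =
        1 / 2 * B (vp i) (vp i) - 1 / 2 * B (vm i) (vm i) := by
      simp only [midVec, map_smul, map_add, map_sub, LinearMap.smul_apply, LinearMap.add_apply,
        smul_eq_mul, hBsymm (vm i) (vp i)]
      ring
    rw [h, hα, LinearMap.sub_apply, LinearMap.sub_apply, hB]
    ring
end

section
/- Let H be a real inner product space with inner product (·,·) and induced norm ‖·‖. Fix an integer k ≥ 1 and real numbers γ, τ > 0 and c₀ ≥ 0. Let B, C : H × H → ℝ be bilinear maps with B symmetric and B(x, x) ≥ 0 for all x ∈ H, and with |C(x, y)| ≤ c₀ ‖x‖ ‖y‖ for all x, y ∈ H; set D := B − C. For families of vectors v₁⁻, …, v_k⁻ and v₁⁺, …, v_k⁺ in H, set v̄_i := (v_i⁺ + v_i⁻)/2 and m_i := (v̄_i, v̄_i); say that the step equations hold for D if for every 1 ≤ i ≤ k and every χ ∈ H one has (γτ)⁻¹ (v_i⁺ − v_i⁻, χ) = −m_i D(v̄_i, χ) + (v̄_i, χ) D(v̄_i, v̄_i) + Σ_{l<i} m_i (v_l⁺, χ) D(v̄_i, v_l⁺) +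 Σ_{l>i} m_i (v_l⁻, χ) D(v̄_i, v_l⁻); and say that the step is nondegenerate for D if (τγ)⁻¹ ≠ (1/2) D(v̄_i, v̄_i) for every 1 ≤ i ≤ k. Suppose (v_i⁻, v_j⁻) = δ_{ij} for all 1 ≤ i, j ≤ k, the step equations hold for D, the step is nondegenerate for D, and γ c₀ τ ≤ √2. Then for every 1 ≤ i ≤ k, B(v_i⁺, v_i⁺) ≤ B(v_i⁻, v_i⁻) + 2 γ c₀² τ. -/
/-!
Process the indices in order, replacing one old vector by its new one at a time. At index `i` the
current family `e = (v₁⁺, …, v_{i-1}⁺, v_i⁻, …, v_k⁻)` is orthonormal, and the two sums of the step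
equation are a single sum over `e l`, `l ≠ i`.

* Testing with `e j`, `j ≠ i`, leaves `λ (v⁺, e j) = (1/2) D(v̄, v̄) (v⁺, e j)` with `λ = (γτ)⁻¹`, so
  `v⁺ ⟂ e j` by nondegeneracy. Testing with `v̄` then gives `‖v⁺‖ = ‖v⁻‖ = 1`. Hence the updated
  family is again orthonormal (`replace_orthonormal`, iterated in `hybrid_orthonormal`).
* Testing with `w = v⁺ - v⁻`, which is orthogonal to `v̄` and to every `e j`, gives
  `λ ‖w‖² = -m D(v̄, w)` with `m = ‖v̄‖² ≤ 1`. Since `2 B(v̄, w) = B(v⁺, v⁺) - B(v⁻, v⁻)`, completing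
  the square in `‖w‖` against `|C(v̄, w)| ≤ c₀ ‖v̄‖ ‖w‖` bounds the energy increase by
  `γ τ c₀² m² / 2` (`replace_energy`), which is stronger than the claimed bound. Here `m ≠ 0`, as
  otherwise `w = 0` and `m = 1`.
-/

open scoped RealInnerProductSpace BigOperators

/-- The step equation for replacing the `i`-th member of a family `e` by `p`, where
`v` plays the role of the midpoint of `p` and `e i`, and `lam` that of `(γτ)⁻¹`. -/
def ReplaceEq {H ι : Type*} [NormedAddCommGroup H] [InnerProductSpace ℝ H] [Fintype ι]
    [DecidableEq ι] (lam : ℝ) (D : H →ₗ[ℝ] H →ₗ[ℝ] ℝ) (e : ι → H) (i : ι) (p v : H) : Prop :=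
  ∀ χ : H, lam * ⟪p - e i, χ⟫ = -⟪v, v⟫ * D v χ + ⟪v, χ⟫ * D v v
    + ∑ l ∈ Finset.univ.erase i, ⟪v, v⟫ * ⟪e l, χ⟫ * D v (e l)

/-- Replacing `e i` by `p` in an orthonormal family keeps the family orthonormal. -/
theorem replace_orthonormal {H ι : Type*} [NormedAddCommGroup H] [InnerProductSpace ℝ H]
    [Fintype ι] [DecidableEq ι] {lam : ℝ} (hlam : 0 < lam) {D : H →ₗ[ℝ] H →ₗ[ℝ] ℝ} {e : ι → H}
    {i : ι} {p v : H} (hv : v = (2 : ℝ)⁻¹ • (p + e i))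
    (he : ∀ a b, ⟪e a, e b⟫ = if a = b then (1 : ℝ) else 0)
    (hs : ReplaceEq lam D e i p v) (hnd : lam ≠ (1 / 2) * D v v) :
    (∀ j, j ≠ i → ⟪e j, p⟫ = 0) ∧ ⟪p, p⟫ = 1 := by
  have hperp : ∀ j, j ≠ i → ⟪e j, p⟫ = 0 := by
    intro j hj
    have h := hs (e j)
    have hsum : ∑ l ∈ Finset.univ.erase i, ⟪v, v⟫ * ⟪e l, e j⟫ * D v (e l)
        = ⟪v, v⟫ * D v (e j) := by
      rw [Finset.sum_eq_single j]
      · rw [he j j, if_pos rfl, mul_one]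
      · intro l _ hl
        simp [he, hl]
      · intro h
        simp [hj] at h
    have hvj : ⟪v, e j⟫ = (1 / 2) * ⟪p, e j⟫ := by
      rw [hv, real_inner_smul_left, inner_add_left, he i j, if_neg (Ne.symm hj)]
      ring
    rw [hsum, hvj, inner_sub_left, he i j, if_neg (Ne.symm hj)] at h
    have h0 : (lam - (1 / 2) * D v v) * ⟪p, e j⟫ = 0 := by linarith
    rw [real_inner_comm]
    exact (mul_eq_zero.mp h0).resolve_left (sub_ne_zero.mpr hnd)
  refine ⟨hperp, ?_⟩
  have h := hs v
  have hsum : ∑ l ∈ Finset.univ.erase i, ⟪v, v⟫ * ⟪e l, v⟫ * D v (e l) = 0 := by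
    refine Finset.sum_eq_zero fun l hl => ?_
    have hl' : l ≠ i := Finset.ne_of_mem_erase hl
    have : ⟪e l, v⟫ = 0 := by
      rw [hv, real_inner_smul_right, inner_add_right, hperp l hl', he l i, if_neg hl']
      simp
    rw [this]
    ring
  have hdiff : ⟪p - e i, v⟫ = (1 / 2) * (⟪p, p⟫ - 1) := by
    have hii := he i i
    rw [if_pos rfl] at hii
    rw [hv, real_inner_smul_right, inner_add_right, inner_sub_left, inner_sub_left, hii,
      real_inner_comm p (e i)]
    ring
  rw [hsum, hdiff] at h
  have h0 : lam * (⟪p, p⟫ - 1) = 0 := by linarith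
  linarith [(mul_eq_zero.mp h0).resolve_left hlam.ne']

/-- Energy bound for a single replacement: the equation tested with `p - e i`, where only the
`D v (p - e i)` term survives. -/
theorem replace_energy {H ι : Type*} [NormedAddCommGroup H] [InnerProductSpace ℝ H]
    [Fintype ι] [DecidableEq ι] {lam c₀ : ℝ} (hlam : 0 < lam)
    {B C : H →ₗ[ℝ] H →ₗ[ℝ] ℝ} (hBsymm : ∀ x y : H, B x y = B y x)
    (hC : ∀ x y : H, |C x y| ≤ c₀ * ‖x‖ * ‖y‖) {e : ι → H}
    {i : ι} {p v : H} (hv : v = (2 : ℝ)⁻¹ • (p + e i))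
    (he : ∀ a b, ⟪e a, e b⟫ = if a = b then (1 : ℝ) else 0)
    (hs : ReplaceEq lam (B - C) e i p v) (hnd : lam ≠ (1 / 2) * (B - C) v v) :
    B p p ≤ B (e i) (e i) + c₀ ^ 2 / (2 * lam) := by
  obtain ⟨hperp, hpp⟩ := replace_orthonormal hlam hv he hs hnd
  have hii := he i i
  rw [if_pos rfl] at hii
  have hsum : ∑ l ∈ Finset.univ.erase i, ⟪v, v⟫ * ⟪e l, p - e i⟫ * (B - C) v (e l) = 0 := by
    refine Finset.sum_eq_zero fun l hl => ?_
    have hl' : l ≠ i := Finset.ne_of_mem_erase hl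
    rw [inner_sub_right, hperp l hl', he l i, if_neg hl']
    ring
  have hvw : ⟪v, p - e i⟫ = 0 := by
    rw [hv, real_inner_smul_left, inner_sub_right, inner_add_left, inner_add_left, hpp, hii,
      real_inner_comm p (e i)]
    ring
  have h := hs (p - e i)
  rw [hsum, hvw, real_inner_self_eq_norm_sq, real_inner_self_eq_norm_sq] at h
  have hB : B v (p - e i) = (1 / 2) * (B p p - B (e i) (e i)) := by
    rw [hv]
    simp only [map_smul, map_add, map_sub, LinearMap.smul_apply, LinearMap.add_apply, smul_eq_mul]
    rw [hBsymm (e i) p]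
    ring
  -- The parallelogram identity for the unit vectors `p` and `e i`.
  have hpar : ‖v‖ ^ 2 + ‖p - e i‖ ^ 2 / 4 = 1 := by
    rw [← real_inner_self_eq_norm_sq, ← real_inner_self_eq_norm_sq, hv, real_inner_smul_left,
      real_inner_smul_right, inner_sub_right, inner_sub_left, inner_sub_left, inner_add_right,
      inner_add_left, inner_add_left, hpp, hii, real_inner_comm p (e i)]
    ring
  have hCv := (abs_le.mp (hC v (p - e i))).2
  rw [LinearMap.sub_apply, LinearMap.sub_apply, hB] at h
  generalize ‖p - e i‖ = s at *
  generalize ‖v‖ = r at *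
  generalize C v (p - e i) = c at *
  have hr : 0 < r ^ 2 := by
    refine lt_of_le_of_ne (sq_nonneg r) fun hr0 => ?_
    rw [← hr0] at h hpar
    have hs0 : lam * s ^ 2 = 0 := by linarith
    have := (mul_eq_zero.mp hs0).resolve_left hlam.ne'
    linarith
  have hr1 : r ^ 2 ≤ 1 := by nlinarith [sq_nonneg s]
  have hmul := mul_le_mul_of_nonneg_left hCv hr.le
  have key : r ^ 2 * (2 * lam * (B p p - B (e i) (e i))) ≤ r ^ 2 * (r ^ 4 * c₀ ^ 2) := by
    have h1 := mul_le_mul_of_nonneg_left hmul hlam.le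
    -- The square vanishes at the value of `s` maximizing `-lam * s ^ 2 + r ^ 3 * c₀ * s`.
    nlinarith [sq_nonneg (2 * lam * s - r ^ 3 * c₀)]
  have key2 := le_of_mul_le_mul_left key hr
  have hr4 : r ^ 4 * c₀ ^ 2 ≤ 1 * c₀ ^ 2 := by
    have : r ^ 4 ≤ 1 := by nlinarith
    gcongr
  have : B p p - B (e i) (e i) ≤ c₀ ^ 2 / (2 * lam) := by
    rw [le_div_iff₀ (by positivity)]
    linarith
  linarith

/-- The intermediate family in which the first `n` old vectors have been replaced by new ones. -/
def hybrid {H : Type*} {k : ℕ} (vm vp : Fin k → H) (n : ℕ) (l : Fin k) : H :=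
  if l.val < n then vp l else vm l

theorem hybrid_self {H : Type*} {k : ℕ} (vm vp : Fin k → H) (i : Fin k) :
    hybrid vm vp i.val i = vm i := by
  simp [hybrid]

theorem hybrid_succ {H : Type*} {k : ℕ} (vm vp : Fin k → H) (i l : Fin k) :
    hybrid vm vp (i.val + 1) l = if l = i then vp i else hybrid vm vp i.val l := by
  by_cases h : l = i
  · simp [hybrid, h]
  · have : l.val ≠ i.val := fun h' => h (Fin.ext h')
    have h2 : l.val < i.val + 1 ↔ l.val < i.val := by omega
    simp only [hybrid, h, h2, if_false]

/-- The sums over `l < i` (new vectors) and `l > i` (old vectors) merge into one sum over `l ≠ i` of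
the `i`-th intermediate family. -/
theorem StepEqs.replaceEq {H : Type*} [NormedAddCommGroup H] [InnerProductSpace ℝ H]
    {k : ℕ} {γ τ : ℝ} {vm vp : Fin k → H} {D : H →ₗ[ℝ] H →ₗ[ℝ] ℝ}
    (h : StepEqs γ τ vm vp D) (i : Fin k) :
    ReplaceEq (γ * τ)⁻¹ D (hybrid vm vp i.val) i (vp i) (midVec vm vp i) := by
  intro χ
  rw [hybrid_self, h i χ, add_assoc]
  congr 1
  have hsplit : (Finset.univ.erase i : Finset (Fin k))
      = Finset.univ.filter (fun l => l < i) ∪ Finset.univ.filter (fun l => i < l) := by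
    ext l
    simp
  rw [hsplit, Finset.sum_union]
  · congr 1
    · refine Finset.sum_congr rfl fun l hl => ?_
      have hl' : l.val < i.val := (Finset.mem_filter.mp hl).2
      simp [hybrid, hl']
    · refine Finset.sum_congr rfl fun l hl => ?_
      have hl' : i.val < l.val := (Finset.mem_filter.mp hl).2
      simp [hybrid, hl'.not_gt]
  · rw [Finset.disjoint_left]
    intro l h1 h2
    exact lt_asymm (Finset.mem_filter.mp h1).2 (Finset.mem_filter.mp h2).2

theorem hybrid_orthonormal {H : Type*} [NormedAddCommGroup H] [InnerProductSpace ℝ H]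
    {k : ℕ} {γ τ : ℝ} (hγ : 0 < γ) (hτ : 0 < τ) {vm vp : Fin k → H} {D : H →ₗ[ℝ] H →ₗ[ℝ] ℝ}
    (horth : ∀ i j : Fin k, ⟪vm i, vm j⟫ = if i = j then (1 : ℝ) else 0)
    (hstep : StepEqs γ τ vm vp D) (hnd : StepNondeg γ τ vm vp D) (n : ℕ) (hn : n ≤ k) :
    ∀ a b : Fin k, ⟪hybrid vm vp n a, hybrid vm vp n b⟫ = if a = b then (1 : ℝ) else 0 := by
  induction n with
  | zero => simpa [hybrid] using horth
  | succ n ih =>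
    have he := ih (by omega)
    let i : Fin k := ⟨n, by omega⟩
    have hv : midVec vm vp i = (2 : ℝ)⁻¹ • (vp i + hybrid vm vp i.val i) := by
      rw [hybrid_self]
      rfl
    have hnd' := hnd i
    rw [mul_comm τ γ] at hnd'
    obtain ⟨hperp, hpp⟩ :=
      replace_orthonormal (inv_pos.mpr (mul_pos hγ hτ)) hv he (hstep.replaceEq i) hnd'
    intro a b
    change ⟪hybrid vm vp (i.val + 1) a, hybrid vm vp (i.val + 1) b⟫ = _
    rw [hybrid_succ, hybrid_succ]
    by_cases ha : a = i <;> by_cases hb : b = i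
    · rw [if_pos ha, if_pos hb, if_pos (ha.trans hb.symm), hpp]
    · rw [if_pos ha, if_neg hb, if_neg (fun h : a = b => hb (h ▸ ha)), real_inner_comm, hperp b hb]
    · rw [if_neg ha, if_pos hb, if_neg (fun h : a = b => ha (h ▸ hb)), hperp a ha]
    · rw [if_neg ha, if_neg hb]
      exact he a b

/-- one-step energy stability, abstract form of Theorem 4.1. With
`D = B − C`, `B` symmetric positive semidefinite, `|C(x,y)| ≤ c₀‖x‖‖y‖`, orthonormal old
family, step equations, nondegeneracy, and `γ c₀ τ ≤ √2`, each `B`-energy grows by at most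
`2 γ c₀² τ` per step. -/
theorem stmt_9 {H : Type*} [NormedAddCommGroup H] [InnerProductSpace ℝ H]
    (k : ℕ) (hk : 1 ≤ k) (γ τ c₀ : ℝ) (hγ : 0 < γ) (hτ : 0 < τ) (hc₀ : 0 ≤ c₀)
    (B C : H →ₗ[ℝ] H →ₗ[ℝ] ℝ) (hBsymm : ∀ x y : H, B x y = B y x)
    (hBpos : ∀ x : H, 0 ≤ B x x)
    (hC : ∀ x y : H, |C x y| ≤ c₀ * ‖x‖ * ‖y‖)
    (vm vp : Fin k → H)
    (horth : ∀ i j : Fin k, ⟪vm i, vm j⟫ = if i = j then (1 : ℝ) else 0)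
    (hstep : StepEqs γ τ vm vp (B - C))
    (hnd : StepNondeg γ τ vm vp (B - C))
    (hsmall : γ * c₀ * τ ≤ Real.sqrt 2) :
    ∀ i : Fin k, B (vp i) (vp i) ≤ B (vm i) (vm i) + 2 * γ * c₀ ^ 2 * τ := by
  intro i
  have hv : midVec vm vp i = (2 : ℝ)⁻¹ • (vp i + hybrid vm vp i.val i) := by
    rw [hybrid_self]
    rfl
  have hnd' := hnd i
  rw [mul_comm τ γ] at hnd'
  have h := replace_energy (inv_pos.mpr (mul_pos hγ hτ)) hBsymm hC hv
    (hybrid_orthonormal hγ hτ horth hstep hnd i.val i.isLt.le) (hstep.replaceEq i) hnd'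
  rw [hybrid_self] at h
  have hle : c₀ ^ 2 / (2 * (γ * τ)⁻¹) = γ * c₀ ^ 2 * τ / 2 := by
    field_simp
  have hnn : 0 ≤ γ * c₀ ^ 2 * τ := by positivity
  linarith
end

section
/- Let H be a real inner product space with inner product (·,·) and induced norm ‖·‖, and let B : H × H → ℝ be a symmetric bilinear map with B(x, x) ≥ 0 for all x ∈ H. Fix an integer k ≥ 1 and real numbers β, τ > 0 and c_v, c_f ≥ 0. Let v₁, …, v_k ∈ H satisfy (v_i, v_j) = δ_{ij} and B(v_i, v_i) ≤ c_v² for all 1 ≤ i, j ≤ k, let F ∈ H satisfy ‖F‖ ≤ c_f, and let u⁻, u⁺ ∈ H satisfy, for every χ ∈ H, (βτ)⁻¹ (u⁺ − u⁻, χ) + B(u⁺, χ) − 2 Σ_{i=1}^k B(v_i, u⁺) (v_i, χ) = (F, χ) − 2 Σ_{i=1}^k (F, v_i) (v_i, χ). Then (1 − 4 β k² c_v² τ) B(u⁺, u⁺) ≤ B(u⁻, u⁻) + 9 β k² c_f² τ. -/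
open scoped RealInnerProductSpace BigOperators

/-!
Testing the update with `χ = d := u⁺ - u⁻` and using the polarization identity
`2 B(u⁺, d) = B(u⁺, u⁺) - B(u⁻, u⁻) + B(d, d)` together with `B(d, d) ≥ 0` reduces the claim to a
bound on the remaining terms. Since the `vᵢ` are unit vectors, Cauchy–Schwarz (for the inner product
and for `B`) bounds the load terms by `(1 + 2k) c_f ‖d‖ ≤ 3k c_f ‖d‖` and the reflection term by
`2k c_v √B(u⁺, u⁺) ‖d‖`. Young's inequality splits off `(βτ)⁻¹ ‖d‖²` from twice each of these, and
the two copies are absorbed by the term `2 (βτ)⁻¹ ‖d‖²` on the left.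
-/

/-- Bounds both projection sums of the scheme, with `aᵢ = B(vᵢ, u⁺)` and `aᵢ = (F, vᵢ)`. -/
lemma abs_sum_mul_inner_le {H : Type*} [NormedAddCommGroup H] [InnerProductSpace ℝ H]
    {k : ℕ} {v : Fin k → H} (hv : ∀ i, ‖v i‖ = 1) {a : Fin k → ℝ} {M : ℝ}
    (ha : ∀ i, |a i| ≤ M) (d : H) :
    |∑ i, a i * ⟪v i, d⟫| ≤ k * (M * ‖d‖) := by
  calc |∑ i, a i * ⟪v i, d⟫| ≤ ∑ i, |a i * ⟪v i, d⟫| := Finset.abs_sum_le_sum_abs _ _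
    _ ≤ ∑ _i : Fin k, M * ‖d‖ := by
        refine Finset.sum_le_sum fun i _ => ?_
        have h := abs_real_inner_le_norm (v i) d
        rw [hv i, one_mul] at h
        rw [abs_mul]
        exact mul_le_mul (ha i) h (abs_nonneg _) ((abs_nonneg _).trans (ha i))
    _ = k * (M * ‖d‖) := by simp

/-- Young's inequality with weight `b`. -/
lemma two_mul_mul_le_young {b : ℝ} (hb : 0 < b) (x y : ℝ) :
    2 * (x * y) ≤ b⁻¹ * y ^ 2 + b * x ^ 2 := by
  have h : 0 ≤ b⁻¹ * (y - b * x) ^ 2 := by positivity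
  have e : b⁻¹ * (y - b * x) ^ 2 = b⁻¹ * y ^ 2 + b * x ^ 2 - 2 * (x * y) := by
    field_simp
    ring
  linarith

/-- state-variable part of Theorem 4.1, abstract one-step form. Let `B` be a
symmetric positive semidefinite bilinear form, `v₁, …, v_k` orthonormal with `B(vᵢ, vᵢ) ≤ c_v²`,
`‖F‖ ≤ c_f`, and suppose the state update
`(βτ)⁻¹ (u⁺ − u⁻, χ) + B(u⁺, χ) − 2 Σᵢ B(vᵢ, u⁺)(vᵢ, χ) = (F, χ) − 2 Σᵢ (F, vᵢ)(vᵢ, χ)`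
holds for every test vector `χ`. Then
`(1 − 4βk²c_v²τ) B(u⁺, u⁺) ≤ B(u⁻, u⁻) + 9βk²c_f²τ`. -/
theorem stmt_12 {H : Type*} [NormedAddCommGroup H] [InnerProductSpace ℝ H]
    (k : ℕ) (hk : 1 ≤ k) (β τ c_v c_f : ℝ) (hβ : 0 < β) (hτ : 0 < τ)
    (hcv : 0 ≤ c_v) (hcf : 0 ≤ c_f)
    (B : H →ₗ[ℝ] H →ₗ[ℝ] ℝ) (hBsymm : ∀ x y : H, B x y = B y x)
    (hBpos : ∀ x : H, 0 ≤ B x x)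
    (v : Fin k → H)
    (horth : ∀ i j : Fin k, ⟪v i, v j⟫ = if i = j then (1 : ℝ) else 0)
    (hvB : ∀ i : Fin k, B (v i) (v i) ≤ c_v ^ 2)
    (F : H) (hF : ‖F‖ ≤ c_f)
    (um up : H)
    (hupdate : ∀ χ : H,
      (β * τ)⁻¹ * ⟪up - um, χ⟫ + B up χ - 2 * ∑ i, B (v i) up * ⟪v i, χ⟫ =
        ⟪F, χ⟫ - 2 * ∑ i, ⟪F, v i⟫ * ⟪v i, χ⟫) :
    (1 - 4 * β * (k : ℝ) ^ 2 * c_v ^ 2 * τ) * B up up ≤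
      B um um + 9 * β * (k : ℝ) ^ 2 * c_f ^ 2 * τ := by
  have hb : 0 < β * τ := mul_pos hβ hτ
  have hk1 : (1 : ℝ) ≤ k := by exact_mod_cast hk
  have hv : ∀ i, ‖v i‖ = 1 := fun i => by
    have h := horth i i
    rw [if_pos rfl, real_inner_self_eq_norm_sq] at h
    exact (pow_eq_one_iff_of_nonneg (norm_nonneg _) two_ne_zero).1 h
  set d := up - um with hd
  set s := √(B up up) with hs
  have hs2 : s ^ 2 = B up up := Real.sq_sqrt (hBpos up)
  have hs0 : 0 ≤ s := Real.sqrt_nonneg _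
  have hBv : ∀ i, |B (v i) up| ≤ c_v * s := fun i => by
    refine abs_le_of_sq_le_sq ?_ (by positivity)
    have h := LinearMap.BilinForm.apply_sq_le_of_symm B hBpos ⟨hBsymm⟩ (v i) up
    rw [mul_pow, hs2]
    exact h.trans (mul_le_mul_of_nonneg_right (hvB i) (hBpos up))
  have hFv : ∀ i, |⟪F, v i⟫| ≤ c_f := fun i => by
    have h := abs_real_inner_le_norm F (v i)
    rw [hv i, mul_one] at h
    exact h.trans hF
  have hFd : ⟪F, d⟫ ≤ c_f * ‖d‖ :=
    (real_inner_le_norm F d).trans (mul_le_mul_of_nonneg_right hF (norm_nonneg d))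
  have hsumB := (abs_le.1 (abs_sum_mul_inner_le hv hBv d)).2
  have hsumF := (abs_le.1 (abs_sum_mul_inner_le hv hFv d)).1
  have hkF : c_f * ‖d‖ ≤ k * (c_f * ‖d‖) := le_mul_of_one_le_left (by positivity) hk1
  have hpolar : 2 * B up d = B up up - B um um + B d d := by
    simp only [hd, map_sub, LinearMap.sub_apply]
    rw [hBsymm um up]
    ring
  have hdd := hBpos d
  have htest := hupdate d
  rw [real_inner_self_eq_norm_sq] at htest
  have hyoungF := two_mul_mul_le_young hb (3 * k * c_f) ‖d‖
  have hyoungB := two_mul_mul_le_young hb (2 * k * c_v * s) ‖d‖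
  have hexpand : β * τ * (2 * k * c_v * s) ^ 2 = 4 * β * (k : ℝ) ^ 2 * c_v ^ 2 * τ * B up up := by
    rw [← hs2]
    ring
  linarith
end

section
/- Let H be a real inner product space with inner product (·,·) and induced norm ‖·‖. Fix integers k ≥ 1 and N ≥ 0 and real numbers γ, τ > 0 and b₀, c₁ ≥ 0 with γ c₁ τ ≤ 1 and γ b₀² τ ≤ 1/2. Let B : H × H → ℝ be a symmetric bilinear map with B(x, x) ≥ 0 for all x ∈ H, and for each 1 ≤ n ≤ N let C_n : H × H → ℝ be a bilinear map with |C_n(x, y)| ≤ ( b₀ √(B(x, x)) + c₁ ‖x‖ ) ‖y‖ for all x, y ∈ H; set D_n := B − C_n. For families of vectors v₁⁻, …, v_k⁻ and v₁⁺, …, v_k⁺ in H and a bilinear map D, set v̄_i := (v_i⁺ + v_i⁻)/2 and m_i := (v̄_i, v̄_i); say that the step equations hold for D if for every 1 ≤ i ≤ k and every χ ∈ H one has (γτ)⁻¹ (v_i⁺ − v_i⁻, χ) = −m_i D(v̄_i, χ) + (v̄_i, χ) D(v̄_i, v̄_i) + Σ_{l<i} m_i (v_l⁺, χ) D(v̄_i,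 v_l⁺) + Σ_{l>i} m_i (v_l⁻, χ) D(v̄_i, v_l⁻); and say that the step is nondegenerate for D if (τγ)⁻¹ ≠ (1/2) D(v̄_i, v̄_i) for every 1 ≤ i ≤ k. Let (v_i^n)_{1≤i≤k, 0≤n≤N} be vectors in H with (v_i⁰, v_j⁰) = δ_{ij} for all i, j, such that for each 1 ≤ n ≤ N the families (v_i^{n−1})_i and (v_i^{n})_i satisfy the step equations for D_n and the step is nondegenerate for D_n. Then for all 0 ≤ n ≤ N and all 1 ≤ i ≤ k one has B(v_i^n, v_i^n) ≤ exp(4 γ b₀² n τ) ( B(v_i⁰, v_i⁰) + 4 γ c₁² n τ ). -/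
/-!
The step equations update the family one index at a time: the equation for `i` couples `vᵢ⁻, vᵢ⁺`
only to the mixed family `v₁⁺, …, vᵢ₋₁⁺, vᵢ⁻, …, v_k⁻` (`mixFam`). If that family is orthonormal,
testing with its member `e_j`, `j ≠ i`, gives `((γτ)⁻¹ − D(v̄ᵢ, v̄ᵢ)/2) (vᵢ⁺, e_j) = 0`, so
nondegeneracy forces `vᵢ⁺ ⟂ e_j`; testing with `v̄ᵢ` then gives `‖vᵢ⁺‖ = ‖vᵢ⁻‖`. Hence the mixed
family stays orthonormal when `vᵢ⁻` is replaced by `vᵢ⁺` (`step_orthonormal`).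

Once orthonormality is known, testing with `w = vᵢ⁺ − vᵢ⁻` removes every projection term and leaves
`‖w‖² = −γτ m D(v̄ᵢ, w)` with `m = ‖v̄ᵢ‖² ≤ 1`. As `2 B(v̄ᵢ, w) = B(vᵢ⁺, vᵢ⁺) − B(vᵢ⁻, vᵢ⁻)`, Young's
inequality absorbs the `C`-term into `‖w‖²` and yields a one-step energy estimate
(`step_energy`), which a discrete Gronwall argument iterates.
-/

open scoped RealInnerProductSpace BigOperators

section AuxLemmas

/-- The partially updated family: the first `t` vectors are new, the remaining ones old. -/
def mixFam {H : Type*} {k : ℕ} (vm vp : Fin k → H) (t : ℕ) (l : Fin k) : H :=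
  if l.val < t then vp l else vm l

lemma mixFam_self {H : Type*} {k : ℕ} (vm vp : Fin k → H) (i : Fin k) : mixFam vm vp i i = vm i := by
  simp [mixFam]

lemma mixFam_succ {H : Type*} {k : ℕ} (vm vp : Fin k → H) (i : Fin k) :
    mixFam vm vp (i + 1) = Function.update (mixFam vm vp i) i (vp i) := by
  funext l
  by_cases h : l = i
  · subst h; simp [mixFam]
  · have h' : l.val ≠ i.val := fun e => h (Fin.ext e)
    have : l.val < i.val + 1 ↔ l.val < i.val := by omega
    simp [mixFam, Function.update_of_ne h, this]

variable {H : Type*} [NormedAddCommGroup H] [InnerProductSpace ℝ H]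

/-- The two sums in the step equations are one sum over the mixed family without its `i`-th
member. -/
lemma step_eq_mixFam {k : ℕ} {γ τ : ℝ} {vm vp : Fin k → H} {D : H →ₗ[ℝ] H →ₗ[ℝ] ℝ}
    (h : StepEqs γ τ vm vp D) (i : Fin k) (χ : H) :
    (γ * τ)⁻¹ * ⟪vp i - vm i, χ⟫ =
      -⟪midVec vm vp i, midVec vm vp i⟫ * D (midVec vm vp i) χ
      + ⟪midVec vm vp i, χ⟫ * D (midVec vm vp i) (midVec vm vp i)
      + ∑ l ∈ Finset.univ.erase i, ⟪midVec vm vp i, midVec vm vp i⟫ *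
          ⟪mixFam vm vp i l, χ⟫ * D (midVec vm vp i) (mixFam vm vp i l) := by
  rw [h i χ, add_assoc]
  congr 1
  rw [Finset.sum_filter, Finset.sum_filter, ← Finset.sum_add_distrib,
    ← Finset.sum_subset (Finset.subset_univ (Finset.univ.erase i))]
  · refine Finset.sum_congr rfl fun l hl => ?_
    rcases lt_or_gt_of_ne (Finset.ne_of_mem_erase hl) with hlt | hgt
    · have h1 : l.val < i.val := hlt
      simp [mixFam, hlt, h1, not_lt_of_gt hlt]
    · have h1 : ¬ l.val < i.val := not_lt_of_gt hgt
      simp [mixFam, hgt, h1, not_lt_of_gt hgt]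
  · intro l _ hl
    have : l = i := by simpa using hl
    subst this; simp

/-- Updating the `i`-th vector keeps it orthogonal to the other members of the mixed family and
keeps its norm. -/
lemma step_inner {k : ℕ} {γ τ : ℝ} (hs : 0 < γ * τ) {vm vp : Fin k → H}
    {D : H →ₗ[ℝ] H →ₗ[ℝ] ℝ} (h : StepEqs γ τ vm vp D) (hnd : StepNondeg γ τ vm vp D) (i : Fin k)
    (ho : Orthonormal ℝ (mixFam vm vp i)) :
    (∀ j, j ≠ i → ⟪mixFam vm vp i j, vp i⟫ = 0) ∧ ⟪vp i, vp i⟫ = 1 := by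
  have hvm (j : Fin k) (hj : j ≠ i) : ⟪mixFam vm vp i j, vm i⟫ = 0 := by
    have : ⟪mixFam vm vp i j, mixFam vm vp i i⟫ = 0 := ho.2 hj
    rwa [mixFam_self] at this
  have hvm1 : ⟪vm i, vm i⟫ = 1 := by
    have := ho.1 i
    rw [mixFam_self] at this
    rw [real_inner_self_eq_norm_sq, this]; norm_num
  have horth : ∀ j, j ≠ i → ⟪mixFam vm vp i j, vp i⟫ = 0 := by
    intro j hj
    have key := step_eq_mixFam h i (mixFam vm vp i j)
    -- By orthonormality only the term `l = j` survives, and it cancels `-m D(v̄ᵢ, e_j)`.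
    rw [Finset.sum_eq_single_of_mem j (Finset.mem_erase.2 ⟨hj, Finset.mem_univ j⟩)
      (fun l _ hl => by rw [ho.2 hl]; ring), real_inner_self_eq_norm_sq (mixFam vm vp i j),
      ho.1 j] at key
    have e1 : ⟪vp i - vm i, mixFam vm vp i j⟫ = ⟪mixFam vm vp i j, vp i⟫ := by
      rw [real_inner_comm, inner_sub_right, hvm j hj, sub_zero]
    have e2 : ⟪midVec vm vp i, mixFam vm vp i j⟫ = 2⁻¹ * ⟪mixFam vm vp i j, vp i⟫ := by
      rw [real_inner_comm, midVec, inner_smul_right, inner_add_right, hvm j hj, add_zero]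
    rw [e1, e2] at key
    have hne := sub_ne_zero.2 (hnd i)
    rw [mul_comm τ γ] at hne
    refine (mul_eq_zero.1 (?_ : _ * ⟪mixFam vm vp i j, vp i⟫ = 0)).resolve_left hne
    linear_combination key
  refine ⟨horth, ?_⟩
  have key := step_eq_mixFam h i (midVec vm vp i)
  rw [Finset.sum_eq_zero (fun l hl => by
    have hl' := Finset.ne_of_mem_erase hl
    have : ⟪mixFam vm vp i l, midVec vm vp i⟫ = 0 := by
      rw [midVec, inner_smul_right, inner_add_right, hvm l hl', horth l hl']; simp
    rw [this]; ring)] at key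
  have e : ⟪vp i - vm i, midVec vm vp i⟫ = 2⁻¹ * (⟪vp i, vp i⟫ - ⟪vm i, vm i⟫) := by
    rw [midVec, inner_smul_right, inner_add_right, inner_sub_left, inner_sub_left,
      real_inner_comm (vp i) (vm i)]
    ring
  rw [e, hvm1] at key
  have h0 : (γ * τ)⁻¹ * (2⁻¹ * (⟪vp i, vp i⟫ - 1)) = 0 := by rw [key]; ring
  have := (mul_eq_zero.1 h0).resolve_left (inv_ne_zero hs.ne')
  linarith

lemma mixFam_orthonormal {k : ℕ} {γ τ : ℝ} (hs : 0 < γ * τ) {vm vp : Fin k → H}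
    {D : H →ₗ[ℝ] H →ₗ[ℝ] ℝ} (h : StepEqs γ τ vm vp D) (hnd : StepNondeg γ τ vm vp D)
    (ho : Orthonormal ℝ vm) : ∀ t ≤ k, Orthonormal ℝ (mixFam vm vp t) := by
  intro t
  induction t with
  | zero =>
    intro _
    have : mixFam vm vp 0 = vm := by funext l; simp [mixFam]
    rwa [this]
  | succ t ih =>
    intro ht
    have iht := ih (by omega)
    let i : Fin k := ⟨t, ht⟩
    obtain ⟨h1, h2⟩ := step_inner hs h hnd i iht
    have hn : ‖vp i‖ = 1 := by
      rw [real_inner_self_eq_norm_sq] at h2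
      exact (pow_eq_one_iff_of_nonneg (norm_nonneg _) two_ne_zero).1 h2
    change Orthonormal ℝ (mixFam vm vp (i + 1))
    rw [mixFam_succ]
    constructor
    · intro j
      by_cases hj : j = i
      · subst hj; simpa using hn
      · rw [Function.update_of_ne hj]; exact iht.1 j
    · intro j l hjl
      by_cases hj : j = i
      · subst hj
        rw [Function.update_self, Function.update_of_ne hjl.symm, real_inner_comm]
        exact h1 l hjl.symm
      · rw [Function.update_of_ne hj]
        by_cases hl : l = i
        · subst hl; rw [Function.update_self]; exact h1 j hj
        · rw [Function.update_of_ne hl]; exact iht.2 hjl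

lemma step_orthonormal {k : ℕ} {γ τ : ℝ} (hs : 0 < γ * τ) {vm vp : Fin k → H}
    {D : H →ₗ[ℝ] H →ₗ[ℝ] ℝ} (h : StepEqs γ τ vm vp D) (hnd : StepNondeg γ τ vm vp D)
    (ho : Orthonormal ℝ vm) : Orthonormal ℝ vp := by
  have := mixFam_orthonormal hs h hnd ho k le_rfl
  have e : mixFam vm vp k = vp := by funext l; simp [mixFam]
  rwa [e] at this

/-- One-step energy estimate. With `w = vᵢ⁺ − vᵢ⁻` and `m = ‖v̄ᵢ‖² = 1 − ‖w‖²/4 ∈ (0, 1]`, the step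
equation tested with `w` reads `‖w‖² = −γτ m (B − C)(v̄ᵢ, w)`; the term `C(v̄ᵢ, w)` is absorbed by
Young's inequality. -/
lemma step_energy {k : ℕ} {γ τ b₀ c₁ : ℝ} (hs : 0 < γ * τ)
    {B C : H →ₗ[ℝ] H →ₗ[ℝ] ℝ} (hBsymm : ∀ x y : H, B x y = B y x)
    (hBpos : ∀ x : H, 0 ≤ B x x)
    (hC : ∀ x y : H, |C x y| ≤ (b₀ * Real.sqrt (B x x) + c₁ * ‖x‖) * ‖y‖)
    {vm vp : Fin k → H} (h : StepEqs γ τ vm vp (B - C)) (hnd : StepNondeg γ τ vm vp (B - C))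
    (ho : Orthonormal ℝ vm) (i : Fin k) :
    (1 - γ * τ * b₀ ^ 2 / 2) * B (vp i) (vp i) ≤
      (1 + γ * τ * b₀ ^ 2 / 2) * B (vm i) (vm i) + γ * τ * c₁ ^ 2 := by
  have hoi := mixFam_orthonormal hs h hnd ho i i.2.le
  obtain ⟨h1, h2⟩ := step_inner hs h hnd i hoi
  have hvm1 : ⟪vm i, vm i⟫ = 1 := by
    rw [real_inner_self_eq_norm_sq, ho.1 i]; norm_num
  have key := step_eq_mixFam h i (vp i - vm i)
  rw [Finset.sum_eq_zero (fun l hl => by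
    have hl' := Finset.ne_of_mem_erase hl
    have h3 : ⟪mixFam vm vp i l, mixFam vm vp i i⟫ = 0 := hoi.2 hl'
    rw [mixFam_self] at h3
    rw [inner_sub_right, h1 l hl', h3]; ring)] at key
  have huw : ⟪midVec vm vp i, vp i - vm i⟫ = 0 := by
    rw [midVec, real_inner_smul_left, inner_add_left, inner_sub_right, inner_sub_right,
      real_inner_comm (vp i) (vm i), h2, hvm1]
    ring
  have hm : ⟪midVec vm vp i, midVec vm vp i⟫ = 1 - ‖vp i - vm i‖ ^ 2 / 4 := by
    rw [← real_inner_self_eq_norm_sq, midVec, real_inner_smul_left, real_inner_smul_right,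
      inner_add_left, inner_add_right, inner_add_right, inner_sub_left, inner_sub_right,
      inner_sub_right, real_inner_comm (vp i) (vm i), h2, hvm1]
    ring
  have hBw : B (midVec vm vp i) (vp i - vm i) = (B (vp i) (vp i) - B (vm i) (vm i)) / 2 := by
    simp only [midVec, map_smul, map_add, map_sub, LinearMap.add_apply, LinearMap.smul_apply,
      smul_eq_mul]
    rw [hBsymm (vm i) (vp i)]
    ring
  have hBu : B (midVec vm vp i) (midVec vm vp i) ≤ (B (vp i) (vp i) + B (vm i) (vm i)) / 2 := by
    have h5 := hBpos (vp i - vm i)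
    simp only [midVec, map_smul, map_add, map_sub, LinearMap.add_apply, LinearMap.sub_apply,
      LinearMap.smul_apply, smul_eq_mul] at h5 ⊢
    rw [hBsymm (vm i) (vp i)] at h5 ⊢
    linarith
  have hCw := (le_abs_self _).trans (hC (midVec vm vp i) (vp i - vm i))
  have hu2 : ‖midVec vm vp i‖ ^ 2 = 1 - ‖vp i - vm i‖ ^ 2 / 4 := by
    rw [← real_inner_self_eq_norm_sq, hm]
  have hr2 := Real.sq_sqrt (hBpos (midVec vm vp i))
  have hBu0 := hBpos (midVec vm vp i)
  rw [huw, hm, real_inner_self_eq_norm_sq, LinearMap.sub_apply, LinearMap.sub_apply, hBw] at key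
  generalize γ * τ = s at *
  generalize B (vp i) (vp i) = P at *
  generalize B (vm i) (vm i) = M at *
  generalize B (midVec vm vp i) (midVec vm vp i) = U at *
  generalize C (midVec vm vp i) (vp i - vm i) = c at *
  generalize C (midVec vm vp i) (midVec vm vp i) = c' at *
  generalize ‖vp i - vm i‖ = w at *
  generalize ‖midVec vm vp i‖ = u at *
  generalize Real.sqrt U = r at *
  rw [← hu2] at key
  set X := b₀ * r + c₁ * u with hX
  have hX2 : X ^ 2 ≤ 2 * b₀ ^ 2 * U + 2 * c₁ ^ 2 * u ^ 2 := by
    rw [← hr2]; nlinarith [sq_nonneg (b₀ * r - c₁ * u)]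
  have key' : w ^ 2 = s * (u ^ 2 * (c - (P - M) / 2)) := by
    have := congrArg (s * ·) key
    simp only [← mul_assoc, mul_inv_cancel₀ hs.ne'] at this
    linear_combination this
  have hm0 : 0 < u ^ 2 := by
    rcases (sq_nonneg u).lt_or_eq with h0 | h0
    · exact h0
    · rw [← h0, zero_mul, mul_zero] at key'
      rw [key'] at hu2; linarith
  have hm1 : u ^ 2 ≤ 1 := by nlinarith [sq_nonneg w]
  -- Young's inequality in the form `X w ≤ w² / (s m) + s m X² / 4`, cleared of denominators.
  have hY : (P - M) / 2 ≤ s * u ^ 2 * X ^ 2 / 4 := by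
    have hsm : 0 < s * u ^ 2 := mul_pos hs hm0
    refine le_of_mul_le_mul_left ?_ hsm
    have := mul_le_mul_of_nonneg_left hCw hsm.le
    nlinarith [sq_nonneg (w - s * u ^ 2 * X / 2)]
  have hZ : u ^ 2 * X ^ 2 ≤ 2 * b₀ ^ 2 * U + 2 * c₁ ^ 2 := by
    have h6 : u ^ 2 * X ^ 2 ≤ 1 * X ^ 2 := mul_le_mul_of_nonneg_right hm1 (sq_nonneg X)
    have h7 : c₁ ^ 2 * u ^ 2 ≤ c₁ ^ 2 * 1 := mul_le_mul_of_nonneg_left hm1 (sq_nonneg c₁)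
    linarith
  have hZ' := mul_le_mul_of_nonneg_left hZ hs.le
  have hU' := mul_le_mul_of_nonneg_left hBu (mul_nonneg hs.le (sq_nonneg b₀))
  linarith

/-- The implicit factor `1 / (1 - q/2)` of the one-step estimate costs at most `1 + 4q ≤ exp (4q)`
for `q ≤ 1/2`. -/
lemma gronwall_step {q a P M : ℝ} (hq0 : 0 ≤ q) (hq : q ≤ 1 / 2) (ha : 0 ≤ a) (hM : 0 ≤ M)
    (h : (1 - q / 2) * P ≤ (1 + q / 2) * M + a) :
    P ≤ Real.exp (4 * q) * (M + 4 * a) := by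
  have h1 : P ≤ (1 + 4 * q) * (M + 4 * a) := by
    refine le_of_mul_le_mul_left (h.trans ?_) (by linarith : 0 < 1 - q / 2)
    have hqq : 0 ≤ q * (1 / 2 - q) := mul_nonneg hq0 (by linarith)
    nlinarith [mul_nonneg hqq hM, mul_nonneg hqq ha, mul_nonneg hq0 hM, mul_nonneg hq0 ha]
  refine h1.trans (mul_le_mul_of_nonneg_right ?_ (by linarith))
  linarith [Real.add_one_le_exp (4 * q)]

end AuxLemmas

/-- auxiliary-variable part of Theorem 6.3, abstract multi-step form. For
the fully discrete scheme with `Dₙ = B − Cₙ`, `B` symmetric positive semidefinite,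
`|Cₙ(x,y)| ≤ (b₀ √(B(x,x)) + c₁‖x‖)‖y‖`, orthonormal initial family, step equations and
nondegeneracy at every step, `γ c₁ τ ≤ 1` and `γ b₀² τ ≤ 1/2`, one has
`B(vᵢⁿ, vᵢⁿ) ≤ exp(4 γ b₀² n τ) (B(vᵢ⁰, vᵢ⁰) + 4 γ c₁² n τ)` for all `0 ≤ n ≤ N`. -/
theorem stmt_14 {H : Type*} [NormedAddCommGroup H] [InnerProductSpace ℝ H]
    (k N : ℕ) (hk : 1 ≤ k) (γ τ b₀ c₁ : ℝ) (hγ : 0 < γ) (hτ : 0 < τ)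
    (hb₀ : 0 ≤ b₀) (hc₁ : 0 ≤ c₁)
    (hsmall₁ : γ * c₁ * τ ≤ 1) (hsmall₂ : γ * b₀ ^ 2 * τ ≤ 1 / 2)
    (B : H →ₗ[ℝ] H →ₗ[ℝ] ℝ) (hBsymm : ∀ x y : H, B x y = B y x)
    (hBpos : ∀ x : H, 0 ≤ B x x)
    (C : ℕ → (H →ₗ[ℝ] H →ₗ[ℝ] ℝ))
    (hC : ∀ n : ℕ, 1 ≤ n → n ≤ N →
      ∀ x y : H, |C n x y| ≤ (b₀ * Real.sqrt (B x x) + c₁ * ‖x‖) * ‖y‖)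
    (v : ℕ → Fin k → H)
    (hinit : ∀ i j : Fin k, ⟪v 0 i, v 0 j⟫ = if i = j then (1 : ℝ) else 0)
    (hstep : ∀ n : ℕ, 1 ≤ n → n ≤ N → StepEqs γ τ (v (n - 1)) (v n) (B - C n))
    (hnd : ∀ n : ℕ, 1 ≤ n → n ≤ N → StepNondeg γ τ (v (n - 1)) (v n) (B - C n)) :
    ∀ n : ℕ, n ≤ N → ∀ i : Fin k,
      B (v n i) (v n i) ≤
        Real.exp (4 * γ * b₀ ^ 2 * n * τ) * (B (v 0 i) (v 0 i) + 4 * γ * c₁ ^ 2 * n * τ) := by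
  have hs : 0 < γ * τ := mul_pos hγ hτ
  have horth : ∀ n ≤ N, Orthonormal ℝ (v n) := by
    intro n
    induction n with
    | zero => intro _; exact orthonormal_iff_ite.2 hinit
    | succ n ih =>
      intro hn
      exact step_orthonormal hs (hstep (n + 1) (by omega) hn) (hnd (n + 1) (by omega) hn)
        (ih (by omega))
  intro n
  induction n with
  | zero => intro _ i; simp
  | succ n ih =>
    intro hn i
    have hE := step_energy hs hBsymm hBpos (hC (n + 1) (by omega) hn)
      (hstep (n + 1) (by omega) hn) (hnd (n + 1) (by omega) hn) (horth n (by omega)) i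
    have ha : 0 ≤ γ * τ * c₁ ^ 2 := by positivity
    have hG := gronwall_step (by positivity) (by linarith) ha (hBpos _) hE
    refine hG.trans ?_
    have e : Real.exp (4 * γ * b₀ ^ 2 * ((n + 1 : ℕ) : ℝ) * τ) =
        Real.exp (4 * (γ * τ * b₀ ^ 2)) * Real.exp (4 * γ * b₀ ^ 2 * n * τ) := by
      rw [← Real.exp_add]; congr 1; push_cast; ring
    rw [e, mul_assoc (Real.exp _)]
    refine mul_le_mul_of_nonneg_left ?_ (Real.exp_pos _).le
    -- The source term of this step is inflated by the accumulated exponential, which is `≥ 1`.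
    have h1 : 1 ≤ Real.exp (4 * γ * b₀ ^ 2 * n * τ) := Real.one_le_exp (by positivity)
    have h2 := mul_le_mul_of_nonneg_right h1 ha
    have h3 := ih (by omega) i
    simp only [Nat.add_sub_cancel] at *
    push_cast
    linarith
end
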